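/- arXiv:1104.5307 — 10 statements merged into one kernel-verified Lean document; each statement's English description precedes it below -/
import Mathlib

section
/- Let M be a real Banach space and let F : M → ℝ be a bounded linear functional with operator norm 1. Equip ℝ × ℝ × M with the norm ‖(x,y,z)‖ = max{|x|, |y|, ‖z‖_M, |x + y + F(z)|}, and let B₁, B₂, B₃ be the closed balls of radius 1 in this norm with centers (2,0,0_M), (0,2,0_M) and (2,2,0_M) respectively. Then B₁ ∩ B₂ ∩ B₃ ≠ ∅ if and only if there exists z ∈ M with ‖z‖_M = 1 and |F(z)| = 1. Concretely, the left-hand side says: there exist x, y ∈ ℝ and z ∈ M with max{|x−2|, |y|, ‖z‖_M, |x+y+F(z)−2|} ≤ 1, max{|x|, |y−2|, ‖z‖_M, |x+y+F(z)−2|} ≤ 1 and max{|x−2|, |y−2|, ‖z‖_M, |x+y+F(z)−4|} ≤ 1. -/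
/-- Alfsen–Effros style lemma: in `ℝ × ℝ × M` with norm
`‖(x,y,z)‖ = max {|x|, |y|, ‖z‖, |x + y + F z|}`, the three closed unit balls around
`(2,0,0)`, `(0,2,0)` and `(2,2,0)` have a common point iff `F` attains the value `±1`
on the unit sphere of `M`. -/
theorem stmt0 {M : Type*} [NormedAddCommGroup M] [NormedSpace ℝ M] [CompleteSpace M]
    (F : M →L[ℝ] ℝ) (hF : ‖F‖ = 1) :
    (∃ (x y : ℝ) (z : M),
        max (max |x - 2| |y|) (max ‖z‖ |x + y + F z - 2|) ≤ 1 ∧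
        max (max |x| |y - 2|) (max ‖z‖ |x + y + F z - 2|) ≤ 1 ∧
        max (max |x - 2| |y - 2|) (max ‖z‖ |x + y + F z - 4|) ≤ 1) ↔
      ∃ z : M, ‖z‖ = 1 ∧ |F z| = 1 := by
  simp only [max_le_iff, abs_le]
  constructor
  · rintro ⟨x, y, z, ⟨⟨hx, hy⟩, hz, hs⟩, ⟨⟨hx', hy'⟩, -, -⟩, ⟨-, -, hs'⟩⟩
    have hFz : F z = 1 := by linarith [hx.1, hx'.2, hy.2, hy'.1, hs.2, hs'.1]
    have hle : |F z| ≤ ‖z‖ := by simpa [hF] using F.le_opNorm z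
    rw [hFz, abs_one] at hle
    exact ⟨z, le_antisymm hz hle, by rw [hFz, abs_one]⟩
  · rintro ⟨z, hz, hFz⟩
    obtain ⟨w, hw, hFw⟩ : ∃ w : M, ‖w‖ = 1 ∧ F w = 1 := by
      rcases (abs_eq zero_le_one).mp hFz with h | h
      · exact ⟨z, hz, h⟩
      · exact ⟨-z, by rw [norm_neg, hz], by rw [map_neg, h, neg_neg]⟩
    refine ⟨1, 1, w, ?_⟩
    norm_num [hw, hFw]
end

section
/- Let (M_n)_{n∈ℕ} be a family of real Banach spaces and for each n let F_n : M_n → ℝ be a bounded linear functional with operator norm 1. Then there exists f in lp (fun n => M_n) 1 with ‖f‖ = 1 and ∑_n F_n(f(n)) = 1 if and only if there exist n ∈ ℕ and x ∈ M_n with ‖x‖ = 1 and F_n(x) = 1. -/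
/-- `F_∃` attains its norm on the ℓ¹-direct sum iff some `F_n` attains its norm. -/
theorem stmt2 (M : ℕ → Type*) [∀ n, NormedAddCommGroup (M n)] [∀ n, NormedSpace ℝ (M n)]
    [∀ n, CompleteSpace (M n)] (F : ∀ n, M n →L[ℝ] ℝ) (hF : ∀ n, ‖F n‖ = 1) :
    (∃ f : lp (fun n => M n) 1, ‖f‖ = 1 ∧ ∑' n, F n (f n) = 1) ↔
      ∃ (n : ℕ) (x : M n), ‖x‖ = 1 ∧ F n x = 1 := by
  constructor
  · rintro ⟨f, hf, hsum⟩
    have hnorm : HasSum (fun n => ‖f n‖) 1 := by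
      simpa [hf] using lp.hasSum_norm (p := 1) (by simp) f
    have hle (n : ℕ) : ‖F n (f n)‖ ≤ ‖f n‖ := by
      simpa [hF n] using (F n).le_opNorm (f n)
    have hval : HasSum (fun n => F n (f n)) 1 :=
      hsum ▸ (Summable.of_norm_bounded hnorm.summable hle).hasSum
    have hdiff : HasSum (fun n => ‖f n‖ - F n (f n)) 0 := by
      simpa using hnorm.sub hval
    have heq := (hasSum_zero_iff_of_nonneg
      fun n => sub_nonneg.2 ((le_abs_self _).trans (hle n))).1 hdiff
    obtain ⟨n, hn⟩ : ∃ n, ‖f n‖ ≠ 0 := by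
      by_contra! h
      simp only [h] at hnorm
      exact zero_ne_one (hasSum_zero.unique hnorm)
    refine ⟨n, ‖f n‖⁻¹ • f n, ?_, ?_⟩
    · rw [norm_smul, norm_inv, norm_norm, inv_mul_cancel₀ hn]
    · rw [map_smul, smul_eq_mul, ← sub_eq_zero.1 (congrFun heq n), inv_mul_cancel₀ hn]
  · rintro ⟨n, x, hx, hFx⟩
    refine ⟨lp.single 1 n x, by rw [lp.norm_single one_pos, hx], ?_⟩
    rw [tsum_eq_single n fun m hm => by rw [lp.single_apply_ne _ _ _ hm, map_zero],
      lp.single_apply_self, hFx]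
end

section
/- Let (M_n)_{n∈ℕ} be a family of real Banach spaces and for each n let F_n : M_n → ℝ be a bounded linear functional with operator norm 1. Let f ∈ Π_n M_n be such that the series ∑_{n=0}^∞ 2^{−(n+1)} · max(‖f(n)‖, ‖f(n+1)‖) is summable with sum 1 and the series ∑_{n=0}^∞ 2^{−(n+2)} · (F_n(f(n)) + F_{n+1}(f(n+1))) is summable with sum 1. Then for every n ∈ ℕ, ‖f(n)‖ = 1 and F_n(f(n)) = 1; in particular every F_n attains its norm. -/
/-- Conversely: if `‖f‖_∀ = 1` and `F_∀ f = 1` (both defining series summing to `1`),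
then every coordinate satisfies `‖f n‖ = 1` and `F n (f n) = 1`; in particular every
`F n` attains its norm. -/
theorem stmt4 (M : ℕ → Type*) [∀ n, NormedAddCommGroup (M n)] [∀ n, NormedSpace ℝ (M n)]
    [∀ n, CompleteSpace (M n)] (F : ∀ n, M n →L[ℝ] ℝ) (hF : ∀ n, ‖F n‖ = 1)
    (f : ∀ n, M n)
    (hnorm : HasSum (fun n => ((2 : ℝ) ^ (n + 1))⁻¹ * max ‖f n‖ ‖f (n + 1)‖) 1)
    (hfun : HasSum (fun n => ((2 : ℝ) ^ (n + 2))⁻¹ * (F n (f n) + F (n + 1) (f (n + 1)))) 1) :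
    ∀ n, ‖f n‖ = 1 ∧ F n (f n) = 1 := by
  have hle : ∀ n, F n (f n) ≤ ‖f n‖ := fun n => by
    simpa [hF n] using (le_abs_self _).trans ((F n).le_opNorm (f n))
  have hfactor : ∀ n, ((2 : ℝ) ^ (n + 1))⁻¹ * max ‖f n‖ ‖f (n + 1)‖ -
      ((2 : ℝ) ^ (n + 2))⁻¹ * (F n (f n) + F (n + 1) (f (n + 1))) =
      ((2 : ℝ) ^ (n + 2))⁻¹ *
        (2 * max ‖f n‖ ‖f (n + 1)‖ - (F n (f n) + F (n + 1) (f (n + 1)))) := fun n => by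
    rw [pow_succ _ (n + 1), mul_inv]
    ring
  have hdiff := hnorm.sub hfun
  simp only [hfactor, sub_self] at hdiff
  -- The two series have the same sum and are ordered termwise, hence agree termwise.
  rw [hasSum_zero_iff_of_nonneg fun n => mul_nonneg (by positivity) (by
    linarith [hle n, hle (n + 1), le_max_left ‖f n‖ ‖f (n + 1)‖,
      le_max_right ‖f n‖ ‖f (n + 1)‖])] at hdiff
  have hterm : ∀ n, 2 * max ‖f n‖ ‖f (n + 1)‖ = F n (f n) + F (n + 1) (f (n + 1)) := fun n =>
    sub_eq_zero.mp ((mul_eq_zero.mp (congrFun hdiff n)).resolve_left (by positivity))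
  have hattain : ∀ n, F n (f n) = ‖f n‖ := fun n => by
    linarith [hterm n, hle n, hle (n + 1), le_max_left ‖f n‖ ‖f (n + 1)‖,
      le_max_right ‖f n‖ ‖f (n + 1)‖]
  have hsucc : ∀ n, ‖f (n + 1)‖ = ‖f n‖ := fun n => by
    linarith [hterm n, hattain n, hattain (n + 1), le_max_left ‖f n‖ ‖f (n + 1)‖,
      le_max_right ‖f n‖ ‖f (n + 1)‖]
  have hconst : ∀ n, ‖f n‖ = ‖f 0‖ := fun n => by
    induction n with
    | zero => rfl
    | succ n ih => rw [hsucc, ih]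
  have hone : ‖f 0‖ = 1 := by
    refine (hasSum_geometric_two' ‖f 0‖).unique ?_
    convert hnorm using 2 with n
    rw [hconst n, hconst (n + 1), max_self, pow_succ, mul_inv]
    ring
  intro n
  rw [hattain, hconst, hone]
  exact ⟨rfl, rfl⟩
end

section
/- If (C_n)_{n∈ℕ} is a sequence of subsets of Baire space ℕ^ℕ each of which is continuously reducible to Y, then the union ⋃_{n∈ℕ} C_n is continuously reducible to Y. -/
/-- `ℚ` is regarded as carrying the *discrete* topology, so that `N → ℚ` carries the
product topology with discrete factors. -/
instance (priority := high) discreteRatTopology : TopologicalSpace ℚ := ⊥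

/-- A rational-valued norm on the ℚ-vector space `N = ℕ →₀ ℚ` of finitely supported
functions from `ℕ` to `ℚ`. -/
structure IsRatNorm (p : (ℕ →₀ ℚ) → ℚ) : Prop where
  nonneg : ∀ v, 0 ≤ p v
  eq_zero_iff : ∀ v, p v = 0 ↔ v = 0
  smul_eq : ∀ (q : ℚ) (v), p (q • v) = |q| * p v
  add_le : ∀ v w, p (v + w) ≤ p v + p w

/-- The space `X` of pairs `(p, F)` where `p` is a rational norm on `N` and `F` is a
ℚ-linear functional with `|F v| ≤ p v`, topologized as a subspace of
`(N → ℚ) × (N → ℚ)` (with `ℚ` discrete). -/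
def Xspace : Type :=
  {pF : ((ℕ →₀ ℚ) → ℚ) × ((ℕ →₀ ℚ) → ℚ) //
    IsRatNorm pF.1 ∧ IsLinearMap ℚ pF.2 ∧ ∀ v, |pF.2 v| ≤ pF.1 v}

instance : TopologicalSpace Xspace := instTopologicalSpaceSubtype

/-- A sequence in `N` is Cauchy with respect to the rational norm `p`. -/
def IsCauchyWrt (p : (ℕ →₀ ℚ) → ℚ) (v : ℕ → ℕ →₀ ℚ) : Prop :=
  ∀ ε : ℚ, 0 < ε → ∃ K, ∀ m k, K ≤ m → K ≤ k → p (v m - v k) < ε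

/-- The set `Y ⊆ X` of pairs `(p, F)` such that `F` attains its norm in the completion of
`(N, p)`: there is a `p`-Cauchy sequence `(v k)` with `p (v k) → 1` and `F (v k) → 1`. -/
def Yset : Set Xspace :=
  {x | ∃ v : ℕ → (ℕ →₀ ℚ), IsCauchyWrt x.val.1 v ∧
    (∀ ε : ℚ, 0 < ε → ∃ K, ∀ k, K ≤ k → |x.val.1 (v k) - 1| < ε) ∧
    (∀ ε : ℚ, 0 < ε → ∃ K, ∀ k, K ≤ k → |x.val.2 (v k) - 1| < ε)}

/-- A subset `C` of Baire space `ℕ → ℕ` is continuously reducible to `Y`. -/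
def ContReducibleToY (C : Set (ℕ → ℕ)) : Prop :=
  ∃ φ : (ℕ → ℕ) → Xspace, Continuous φ ∧ ∀ x, x ∈ C ↔ φ x ∈ Yset

namespace IsRatNorm

variable {p : (ℕ →₀ ℚ) → ℚ}

lemma map_zero (hp : IsRatNorm p) : p 0 = 0 := (hp.eq_zero_iff 0).2 rfl

lemma map_neg (hp : IsRatNorm p) (v : ℕ →₀ ℚ) : p (-v) = p v := by
  simpa using hp.smul_eq (-1) v

lemma sub_rev (hp : IsRatNorm p) (v w : ℕ →₀ ℚ) : p (v - w) = p (w - v) := by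
  rw [← hp.map_neg, neg_sub]

lemma le_add_sub (hp : IsRatNorm p) (v w : ℕ →₀ ℚ) : p v ≤ p w + p (v - w) := by
  simpa using hp.add_le w (v - w)

lemma abs_sub_le (hp : IsRatNorm p) (v w : ℕ →₀ ℚ) : |p v - p w| ≤ p (v - w) := by
  have h₁ := hp.le_add_sub v w
  have h₂ := hp.le_add_sub w v
  rw [hp.sub_rev w v] at h₂
  exact abs_le.2 ⟨by linarith, by linarith⟩

/-- Normalizing two vectors of norm at least `δ` multiplies their distance by at most `2 / δ`. -/
lemma normalize_sub_le (hp : IsRatNorm p) {δ : ℚ} (hδ : 0 < δ) {v w : ℕ →₀ ℚ}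
    (hv : δ ≤ p v) (hw : δ ≤ p w) :
    p ((p v)⁻¹ • v - (p w)⁻¹ • w) ≤ 2 * p (v - w) / δ := by
  have hv0 : 0 < p v := hδ.trans_le hv
  have hw0 : 0 < p w := hδ.trans_le hw
  have hsplit : (p v)⁻¹ • v - (p w)⁻¹ • w =
      (p v)⁻¹ • (v - w) + ((p v)⁻¹ - (p w)⁻¹) • w := by
    rw [smul_sub, sub_smul]; abel
  have hcoef : |(p v)⁻¹ - (p w)⁻¹| * p w = (p v)⁻¹ * |p v - p w| := by
    have : (p v)⁻¹ - (p w)⁻¹ = (p v)⁻¹ * (p w)⁻¹ * -(p v - p w) := by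
      field_simp; ring
    rw [this, abs_mul, abs_neg, abs_of_pos (by positivity)]
    field_simp
  have hinv : (p v)⁻¹ ≤ δ⁻¹ := inv_anti₀ hδ hv
  have hd := hp.nonneg (v - w)
  calc p ((p v)⁻¹ • v - (p w)⁻¹ • w)
      ≤ p ((p v)⁻¹ • (v - w)) + p (((p v)⁻¹ - (p w)⁻¹) • w) := hsplit ▸ hp.add_le _ _
    _ = (p v)⁻¹ * p (v - w) + (p v)⁻¹ * |p v - p w| := by
        rw [hp.smul_eq, hp.smul_eq, hcoef, abs_of_pos (by positivity)]
    _ ≤ δ⁻¹ * p (v - w) + δ⁻¹ * p (v - w) := by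
        have := hp.abs_sub_le v w
        gcongr
    _ = 2 * p (v - w) / δ := by ring

end IsRatNorm

/-- A Cauchy sequence bounded away from zero on which `p - F` tends to zero can be normalized to
witness that `F` attains its norm. -/
lemma mem_Yset_of_sub_tendsto (x : Xspace) {v : ℕ → ℕ →₀ ℚ} (hv : IsCauchyWrt x.val.1 v)
    {δ : ℚ} (hδ : 0 < δ) (hlow : ∃ K, ∀ k, K ≤ k → δ ≤ x.val.1 (v k))
    (hF : ∀ ε : ℚ, 0 < ε → ∃ K, ∀ k, K ≤ k → x.val.1 (v k) - x.val.2 (v k) < ε) :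
    x ∈ Yset := by
  obtain ⟨hp, hlin, hle⟩ := x.property
  obtain ⟨L, hL⟩ := hlow
  refine ⟨fun k => (x.val.1 (v k))⁻¹ • v k, fun ε hε => ?_, fun ε hε => ⟨L, fun k hk => ?_⟩,
    fun ε hε => ?_⟩
  · obtain ⟨K, hK⟩ := hv (ε * δ / 2) (by positivity)
    refine ⟨max K L, fun m k hm hk => ?_⟩
    have h := hK m k (le_of_max_le_left hm) (le_of_max_le_left hk)
    refine (hp.normalize_sub_le hδ (hL m (le_of_max_le_right hm))
      (hL k (le_of_max_le_right hk))).trans_lt ?_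
    rw [div_lt_iff₀ hδ]
    linarith
  · have hpos : 0 < x.val.1 (v k) := hδ.trans_le (hL k hk)
    rw [hp.smul_eq, abs_of_pos (inv_pos.2 hpos), inv_mul_cancel₀ hpos.ne', sub_self, abs_zero]
    exact hε
  · obtain ⟨K, hK⟩ := hF (ε * δ) (by positivity)
    refine ⟨max K L, fun k hk => ?_⟩
    have h := hK k (le_of_max_le_left hk)
    have hlk := hL k (le_of_max_le_right hk)
    have hpos : 0 < x.val.1 (v k) := hδ.trans_le hlk
    have hFp := (abs_le.1 (hle (v k))).2
    have heq : x.val.2 ((x.val.1 (v k))⁻¹ • v k) - 1 =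
        -((x.val.1 (v k) - x.val.2 (v k)) / x.val.1 (v k)) := by
      rw [hlin.map_smul, smul_eq_mul]
      field_simp
      ring
    rw [heq, abs_neg, abs_of_nonneg (div_nonneg (by linarith) hpos.le), div_lt_iff₀ hpos]
    exact h.trans_le (by gcongr)

/-- A Cauchy sequence whose norms do not tend to zero is eventually bounded away from zero. -/
lemma IsCauchyWrt.eventually_ge {p : (ℕ →₀ ℚ) → ℚ} (hp : IsRatNorm p) {v : ℕ → ℕ →₀ ℚ}
    (hv : IsCauchyWrt p v) {ε : ℚ} (hε : 0 < ε) (hfreq : ∀ K, ∃ k, K ≤ k ∧ ε ≤ p (v k)) :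
    ∃ K, ∀ k, K ≤ k → ε / 2 ≤ p (v k) := by
  obtain ⟨K, hK⟩ := hv (ε / 2) (by positivity)
  obtain ⟨m, hm, hmε⟩ := hfreq K
  refine ⟨K, fun k hk => ?_⟩
  have h₁ := hp.le_add_sub (v m) (v k)
  have h₂ := hK m k hm hk
  linarith

/-- The splitting of `ℕ →₀ ℚ` into countably many copies of itself. -/
noncomputable def splitEquiv : (ℕ →₀ ℚ) ≃ₗ[ℚ] (ℕ →₀ ℕ →₀ ℚ) :=
  (Finsupp.domLCongr Nat.pairEquiv.symm).trans (Finsupp.curryLinearEquiv ℚ)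

/-- The norm of the `ℓ¹`-sum of a sequence of normed spaces. -/
noncomputable def sumNorm (x : ℕ → Xspace) (v : ℕ →₀ ℚ) : ℚ :=
  (splitEquiv v).sum fun n w => (x n).val.1 w

/-- The functional on the `ℓ¹`-sum which is the given functional on each summand. -/
noncomputable def sumFunctional (x : ℕ → Xspace) (v : ℕ →₀ ℚ) : ℚ :=
  (splitEquiv v).sum fun n w => (x n).val.2 w

lemma sumNorm_eq_sum (x : ℕ → Xspace) {v : ℕ →₀ ℚ} {s : Finset ℕ}
    (hs : (splitEquiv v).support ⊆ s) :
    sumNorm x v = ∑ n ∈ s, (x n).val.1 (splitEquiv v n) :=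
  Finsupp.sum_of_support_subset _ hs _ fun n _ => (x n).property.1.map_zero

lemma sumFunctional_eq_sum (x : ℕ → Xspace) {v : ℕ →₀ ℚ} {s : Finset ℕ}
    (hs : (splitEquiv v).support ⊆ s) :
    sumFunctional x v = ∑ n ∈ s, (x n).val.2 (splitEquiv v n) :=
  Finsupp.sum_of_support_subset _ hs _ fun n _ => (x n).property.2.1.map_zero

lemma sum_le_sumNorm (x : ℕ → Xspace) (v : ℕ →₀ ℚ) (s : Finset ℕ) :
    ∑ n ∈ s, (x n).val.1 (splitEquiv v n) ≤ sumNorm x v := by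
  rw [sumNorm_eq_sum x (Finset.subset_union_right (s₁ := s))]
  exact Finset.sum_le_sum_of_subset_of_nonneg Finset.subset_union_left
    fun n _ _ => (x n).property.1.nonneg _

lemma component_le_sumNorm (x : ℕ → Xspace) (v : ℕ →₀ ℚ) (n : ℕ) :
    (x n).val.1 (splitEquiv v n) ≤ sumNorm x v := by
  simpa using sum_le_sumNorm x v {n}

lemma component_sub_le (x : ℕ → Xspace) (v : ℕ →₀ ℚ) (n : ℕ) :
    (x n).val.1 (splitEquiv v n) - (x n).val.2 (splitEquiv v n) ≤
      sumNorm x v - sumFunctional x v := by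
  have hs : (splitEquiv v).support ⊆ insert n (splitEquiv v).support := Finset.subset_insert _ _
  rw [sumNorm_eq_sum x hs, sumFunctional_eq_sum x hs, ← Finset.sum_sub_distrib]
  exact Finset.single_le_sum
    (f := fun i => (x i).val.1 (splitEquiv v i) - (x i).val.2 (splitEquiv v i))
    (fun i _ => sub_nonneg.2 (le_of_abs_le ((x i).property.2.2 _)))
    (Finset.mem_insert_self _ _)

lemma isRatNorm_sumNorm (x : ℕ → Xspace) : IsRatNorm (sumNorm x) where
  nonneg v := Finset.sum_nonneg fun n _ => (x n).property.1.nonneg _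
  eq_zero_iff v := by
    refine ⟨fun h => splitEquiv.map_eq_zero_iff.1 (Finsupp.ext fun n => ?_), fun h => ?_⟩
    · exact ((x n).property.1.eq_zero_iff _).1
        (le_antisymm (h ▸ component_le_sumNorm x v n) ((x n).property.1.nonneg _))
    · simp [h, sumNorm]
  smul_eq q v := by
    have hs : (splitEquiv (q • v)).support ⊆ (splitEquiv v).support := by
      rw [_root_.map_smul]; exact Finsupp.support_smul
    rw [sumNorm_eq_sum x hs, sumNorm_eq_sum x subset_rfl, Finset.mul_sum]
    exact Finset.sum_congr rfl fun n _ => by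
      rw [_root_.map_smul, Finsupp.smul_apply, (x n).property.1.smul_eq]
  add_le v w := by
    classical
    have hs : (splitEquiv (v + w)).support ⊆
        (splitEquiv v).support ∪ (splitEquiv w).support := by
      rw [map_add]; exact Finsupp.support_add
    rw [sumNorm_eq_sum x hs, sumNorm_eq_sum x Finset.subset_union_left,
      sumNorm_eq_sum x (Finset.subset_union_right (s₁ := (splitEquiv v).support)),
      ← Finset.sum_add_distrib]
    exact Finset.sum_le_sum fun n _ => by
      rw [map_add, Finsupp.add_apply]; exact (x n).property.1.add_le _ _

lemma isLinearMap_sumFunctional (x : ℕ → Xspace) : IsLinearMap ℚ (sumFunctional x) :=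
  ((Finsupp.lsum ℚ fun n => (x n).property.2.1.mk').comp splitEquiv.toLinearMap).isLinear

lemma abs_sumFunctional_le (x : ℕ → Xspace) (v : ℕ →₀ ℚ) :
    |sumFunctional x v| ≤ sumNorm x v :=
  (Finset.abs_sum_le_sum_abs _ _).trans (Finset.sum_le_sum fun n _ => (x n).property.2.2 _)

/-- The `ℓ¹`-sum of a sequence of points of `Xspace`. -/
noncomputable def sumXspace (x : ℕ → Xspace) : Xspace :=
  ⟨(sumNorm x, sumFunctional x), isRatNorm_sumNorm x, isLinearMap_sumFunctional x,
    abs_sumFunctional_le x⟩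

lemma continuous_sumXspace : Continuous sumXspace := by
  have : DiscreteTopology ℚ := ⟨rfl⟩
  have hval : ∀ n, Continuous fun x : ℕ → Xspace => (x n).val :=
    fun n => continuous_subtype_val.comp (continuous_apply n)
  refine Continuous.subtype_mk (Continuous.prodMk (continuous_pi fun v => ?_)
    (continuous_pi fun v => ?_)) _
  · exact continuous_finsetSum _ fun n _ =>
      (continuous_apply (splitEquiv v n)).comp (continuous_fst.comp (hval n))
  · exact continuous_finsetSum _ fun n _ =>
      (continuous_apply (splitEquiv v n)).comp (continuous_snd.comp (hval n))

lemma sumXspace_mem_of_mem {x : ℕ → Xspace} {n : ℕ} (h : x n ∈ Yset) :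
    sumXspace x ∈ Yset := by
  obtain ⟨v, hv, hp, hF⟩ := h
  have hnorm : ∀ w, sumNorm x (splitEquiv.symm (Finsupp.single n w)) = (x n).val.1 w := fun w => by
    rw [sumNorm, LinearEquiv.apply_symm_apply]
    exact Finsupp.sum_single_index (h := fun n w => (x n).val.1 w) (x n).property.1.map_zero
  have hfun : ∀ w, sumFunctional x (splitEquiv.symm (Finsupp.single n w)) = (x n).val.2 w :=
    fun w => by
      rw [sumFunctional, LinearEquiv.apply_symm_apply]
      exact Finsupp.sum_single_index (h := fun n w => (x n).val.2 w) (x n).property.2.1.map_zero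
  refine ⟨fun k => splitEquiv.symm (Finsupp.single n (v k)), fun ε hε => ?_, ?_, ?_⟩
  · simpa only [sumXspace, ← map_sub, ← Finsupp.single_sub, hnorm] using hv ε hε
  · simpa only [sumXspace, hnorm] using hp
  · simpa only [sumXspace, hfun] using hF

/-- A finite sum of sequences tending to zero tends to zero. -/
lemma exists_forall_sum_lt {f : ℕ → ℕ → ℚ} (hf : ∀ n, ∀ ε : ℚ, 0 < ε → ∃ K, ∀ k, K ≤ k → f n k < ε)
    (s : Finset ℕ) : ∀ ε : ℚ, 0 < ε → ∃ K, ∀ k, K ≤ k → ∑ n ∈ s, f n k < ε := by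
  induction s using Finset.induction_on with
  | empty => intro ε hε; exact ⟨0, fun k _ => by simpa using hε⟩
  | insert a s ha ih =>
    intro ε hε
    obtain ⟨K, hK⟩ := ih (ε / 2) (by positivity)
    obtain ⟨L, hL⟩ := hf a (ε / 2) (by positivity)
    refine ⟨max K L, fun k hk => ?_⟩
    rw [Finset.sum_insert ha]
    linarith [hK k (le_of_max_le_left hk), hL k (le_of_max_le_right hk)]

/-- Some component of a Cauchy sequence in the `ℓ¹`-sum whose norms tend to one does not tend
to zero. -/
lemma exists_component_frequently_ge (x : ℕ → Xspace) {v : ℕ → ℕ →₀ ℚ}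
    (hv : IsCauchyWrt (sumNorm x) v)
    (hp : ∀ ε : ℚ, 0 < ε → ∃ K, ∀ k, K ≤ k → |sumNorm x (v k) - 1| < ε) :
    ∃ n, ∃ ε : ℚ, 0 < ε ∧ ∀ K, ∃ k, K ≤ k ∧ ε ≤ (x n).val.1 (splitEquiv (v k) n) := by
  classical
  by_contra! hzero
  obtain ⟨K, hK⟩ := hv (1 / 4) (by norm_num)
  obtain ⟨L, hL⟩ := hp (1 / 4) (by norm_num)
  obtain ⟨M, hM⟩ := exists_forall_sum_lt hzero (splitEquiv (v K)).support (1 / 4) (by norm_num)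
  set k := max K (max L M)
  have hKk : K ≤ k := le_max_left _ _
  have hLk := hL k ((le_max_left L M).trans (le_max_right _ _))
  have hMk := hM k ((le_max_right L M).trans (le_max_right _ _))
  have hdist := hK k K hKk le_rfl
  set s := (splitEquiv (v K)).support
  set t := (splitEquiv (v k)).support
  have hsplit : sumNorm x (v k) = ∑ n ∈ t \ s, (x n).val.1 (splitEquiv (v k) n) +
      ∑ n ∈ s, (x n).val.1 (splitEquiv (v k) n) := by
    rw [sumNorm_eq_sum x (Finset.subset_union_left (s₂ := s)), ← Finset.union_sdiff_right,
      Finset.sum_sdiff Finset.subset_union_right]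
  have htail : ∑ n ∈ t \ s, (x n).val.1 (splitEquiv (v k) n) ≤ sumNorm x (v k - v K) := by
    refine le_trans (Finset.sum_le_sum fun n hn => ?_) (sum_le_sumNorm x (v k - v K) (t \ s))
    rw [map_sub, Finsupp.sub_apply,
      Finsupp.notMem_support_iff.1 (Finset.mem_sdiff.1 hn).2, sub_zero]
  linarith [(abs_lt.1 hLk).1]

lemma sumXspace_mem_iff (x : ℕ → Xspace) : sumXspace x ∈ Yset ↔ ∃ n, x n ∈ Yset := by
  refine ⟨fun ⟨v, hv, hp, hF⟩ => ?_, fun ⟨n, hn⟩ => sumXspace_mem_of_mem hn⟩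
  obtain ⟨n, ε, hε, hfreq⟩ := exists_component_frequently_ge x hv hp
  have hcauchy : IsCauchyWrt (x n).val.1 fun k => splitEquiv (v k) n := fun η hη => by
    obtain ⟨K, hK⟩ := hv η hη
    refine ⟨K, fun m k hm hk => lt_of_le_of_lt ?_ (hK m k hm hk)⟩
    simpa [sumXspace] using component_le_sumNorm x (v m - v k) n
  refine ⟨n, mem_Yset_of_sub_tendsto (x n) hcauchy (half_pos hε)
    (hcauchy.eventually_ge (x n).property.1 hε hfreq) fun η hη => ?_⟩
  obtain ⟨K, hK⟩ := hp (η / 2) (half_pos hη)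
  obtain ⟨L, hL⟩ := hF (η / 2) (half_pos hη)
  refine ⟨max K L, fun k hk => (component_sub_le x (v k) n).trans_lt ?_⟩
  have h₁ := (abs_lt.1 (hK k (le_of_max_le_left hk))).2
  have h₂ := (abs_lt.1 (hL k (le_of_max_le_right hk))).1
  simp only [sumXspace] at h₁ h₂
  linarith

/-- The class of subsets of Baire space continuously reducible to `Y` is closed under
countable unions. -/
theorem stmt8 (C : ℕ → Set (ℕ → ℕ)) (hC : ∀ n, ContReducibleToY (C n)) :
    ContReducibleToY (⋃ n, C n) := by
  choose φ hφ hmem using hC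
  refine ⟨fun x => sumXspace fun n => φ n x,
    continuous_sumXspace.comp (continuous_pi hφ), fun x => ?_⟩
  rw [Set.mem_iUnion, sumXspace_mem_iff]
  exact exists_congr fun n => hmem n x
end

section
/- Every Borel subset C of Baire space ℕ^ℕ is continuously reducible to Y: there is a continuous map φ : ℕ^ℕ → X such that for all x ∈ ℕ^ℕ, x ∈ C if and only if φ(x) ∈ Y. -/
namespace NormAttaining

open Finsupp

/-- The weighted `ℓ¹` norm `∑ w i * |v i|` of a finitely supported function. -/
def weightedSum {ι : Type*} (w : ι → ℚ) (v : ι →₀ ℚ) : ℚ := v.sum fun i q => w i * |q|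

section WeightedSum

variable {ι : Type*} {w w' : ι → ℚ}

lemma weightedSum_eq_of_subset (w : ι → ℚ) (v : ι →₀ ℚ) {Z : Finset ι} (h : v.support ⊆ Z) :
    weightedSum w v = ∑ i ∈ Z, w i * |v i| :=
  Finsupp.sum_of_support_subset v h _ (by simp)

lemma weightedSum_nonneg (hw : ∀ i, 0 ≤ w i) (v : ι →₀ ℚ) : 0 ≤ weightedSum w v :=
  Finset.sum_nonneg fun i _ => mul_nonneg (hw i) (abs_nonneg _)

lemma sum_le_weightedSum (hw : ∀ i, 0 ≤ w i) (v : ι →₀ ℚ) (Z : Finset ι) :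
    ∑ i ∈ Z, w i * |v i| ≤ weightedSum w v := by
  classical
  rw [weightedSum_eq_of_subset w v (Finset.subset_union_left (s₂ := Z))]
  exact Finset.sum_le_sum_of_subset_of_nonneg Finset.subset_union_right
    fun i _ _ => mul_nonneg (hw i) (abs_nonneg _)

lemma le_weightedSum (hw : ∀ i, 0 ≤ w i) (v : ι →₀ ℚ) (i : ι) :
    w i * |v i| ≤ weightedSum w v := by
  simpa using sum_le_weightedSum hw v {i}

lemma weightedSum_add_le (hw : ∀ i, 0 ≤ w i) (u v : ι →₀ ℚ) :
    weightedSum w (u + v) ≤ weightedSum w u + weightedSum w v := by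
  classical
  rw [weightedSum_eq_of_subset w (u + v) Finsupp.support_add,
    weightedSum_eq_of_subset w u (Finset.subset_union_left (s₂ := v.support)),
    weightedSum_eq_of_subset w v (Finset.subset_union_right (s₁ := u.support)),
    ← Finset.sum_add_distrib]
  refine Finset.sum_le_sum fun i _ => ?_
  rw [← mul_add]
  exact mul_le_mul_of_nonneg_left (abs_add_le _ _) (hw i)

lemma weightedSum_smul (w : ι → ℚ) (q : ℚ) (v : ι →₀ ℚ) :
    weightedSum w (q • v) = |q| * weightedSum w v := by
  rw [weightedSum_eq_of_subset w (q • v) Finsupp.support_smul,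
    weightedSum_eq_of_subset w v subset_rfl, Finset.mul_sum]
  refine Finset.sum_congr rfl fun i _ => ?_
  rw [Finsupp.smul_apply, smul_eq_mul, abs_mul]
  ring

lemma weightedSum_mono (h : ∀ i, w i ≤ w' i) (v : ι →₀ ℚ) :
    weightedSum w v ≤ weightedSum w' v :=
  Finset.sum_le_sum fun i _ => mul_le_mul_of_nonneg_right (h i) (abs_nonneg _)

lemma weightedSum_single (w : ι → ℚ) (i : ι) (q : ℚ) :
    weightedSum w (single i q) = w i * |q| := by
  simp [weightedSum, Finsupp.sum_single_index]

lemma weightedSum_const_mul (c : ℚ) (w : ι → ℚ) (v : ι →₀ ℚ) :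
    weightedSum (fun i => c * w i) v = c * weightedSum w v := by
  simp only [weightedSum, Finsupp.sum, Finset.mul_sum, mul_assoc]

lemma abs_linearCombination_le (hw : ∀ i, 0 ≤ w i) (v : ι →₀ ℚ) :
    |linearCombination ℚ w v| ≤ weightedSum w v := by
  rw [linearCombination_apply]
  refine (Finset.abs_sum_le_sum_abs _ _).trans (Finset.sum_le_sum fun i _ => le_of_eq ?_)
  simp only [smul_eq_mul]
  rw [abs_mul, abs_of_nonneg (hw i), mul_comm]

end WeightedSum

/-- The linear map sending `v` to the function `s ↦ ∑ v t`, the sum being over all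
extensions `t` of `s`. -/
noncomputable def mass : (List ℕ →₀ ℚ) →ₗ[ℚ] (List ℕ →₀ ℚ) :=
  linearCombination ℚ fun t => ∑ k ∈ Finset.range (t.length + 1), single (t.take k) (1 : ℚ)

/-- The weight `2 ^ (-|s| - 1)` of a node. -/
def levelWeight (s : List ℕ) : ℚ := (1 / 2) ^ (s.length + 1)

/-- The total sum of the coefficients. -/
noncomputable def total : (List ℕ →₀ ℚ) →ₗ[ℚ] ℚ := linearCombination ℚ fun _ => 1

open Classical in
/-- The weight of the coefficient at `s`: small deep inside the tree `T`, and `1` outside. -/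
noncomputable def nodeWeight (T : Set (List ℕ)) (s : List ℕ) : ℚ :=
  if s ∈ T then (1 / 2) ^ s.length else 1

/-- The norm on finitely supported functions on nodes associated with a tree. -/
noncomputable def treeNorm (T : Set (List ℕ)) (v : List ℕ →₀ ℚ) : ℚ :=
  weightedSum levelWeight (mass v) + weightedSum (nodeWeight T) v

lemma levelWeight_pos (s : List ℕ) : 0 < levelWeight s := by
  unfold levelWeight; positivity

lemma levelWeight_nonneg (s : List ℕ) : 0 ≤ levelWeight s := (levelWeight_pos s).le

lemma two_mul_levelWeight_le (T : Set (List ℕ)) (s : List ℕ) :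
    2 * levelWeight s ≤ nodeWeight T s := by
  unfold levelWeight nodeWeight
  have h : (1 / 2 : ℚ) ^ s.length ≤ 1 := pow_le_one₀ (by norm_num) (by norm_num)
  split_ifs <;> rw [pow_succ] <;> linarith

lemma nodeWeight_pos (T : Set (List ℕ)) (s : List ℕ) : 0 < nodeWeight T s := by
  linarith [two_mul_levelWeight_le T s, levelWeight_pos s]

lemma nodeWeight_nonneg (T : Set (List ℕ)) (s : List ℕ) : 0 ≤ nodeWeight T s :=
  (nodeWeight_pos T s).le

lemma mass_single (t : List ℕ) (q : ℚ) :
    mass (single t q) =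
      q • ∑ k ∈ Finset.range (t.length + 1), single (t.take k) (1 : ℚ) := by
  simp [mass]

lemma mass_single_append (s : List ℕ) (a : ℕ) :
    mass (single (s ++ [a]) 1) = mass (single s 1) + single (s ++ [a]) 1 := by
  rw [mass_single, mass_single, one_smul, one_smul, List.length_append, List.length_singleton,
    Finset.sum_range_succ]
  congr 1
  · refine Finset.sum_congr rfl fun k hk => ?_
    rw [List.take_append_of_le_length (by simpa [Nat.lt_succ_iff] using hk)]
  · rw [List.take_of_length_le (by simp)]

lemma mass_apply (v : List ℕ →₀ ℚ) (s : List ℕ) :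
    mass v s = linearCombination ℚ (fun t => if s <+: t then (1 : ℚ) else 0) v := by
  induction v using Finsupp.induction_linear with
  | zero => simp
  | add u v hu hv => rw [map_add, map_add, Finsupp.add_apply, hu, hv]
  | single t q =>
    rw [← mul_one q, ← smul_eq_mul, ← Finsupp.smul_single, map_smul, map_smul,
      Finsupp.smul_apply]
    congr 1
    rw [linearCombination_single, one_smul]
    induction t using List.reverseRecOn with
    | nil => simp [mass_single, Finsupp.single_apply, eq_comm]
    | append_singleton t a ih =>
      rw [mass_single_append, Finsupp.add_apply, ih, Finsupp.single_apply]
      simp only [List.prefix_concat_iff]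
      by_cases h : s = t ++ [a]
      · subst h
        have : ¬ (t ++ [a] <+: t) := fun h => by simpa using h.length_le
        simp [this]
      · simp [h, Ne.symm h]

lemma mass_nil (v : List ℕ →₀ ℚ) : mass v [] = total v := by
  simp [mass_apply, total]

/-- Kirchhoff's law: the mass above a node is its own coefficient plus the masses above
its children. -/
lemma exists_mass_eq_add_sum (v : List ℕ →₀ ℚ) (s : List ℕ) :
    ∃ A₀ : Finset ℕ, ∀ A, A₀ ⊆ A → mass v s = v s + ∑ a ∈ A, mass v (s ++ [a]) := by
  classical
  induction v using Finsupp.induction_linear with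
  | zero => exact ⟨∅, by simp⟩
  | add u v hu hv =>
    obtain ⟨A, hA⟩ := hu
    obtain ⟨B, hB⟩ := hv
    refine ⟨A ∪ B, fun Z hZ => ?_⟩
    simp only [map_add, Finsupp.add_apply, Finset.sum_add_distrib]
    rw [hA Z (Finset.union_subset_left hZ), hB Z (Finset.union_subset_right hZ)]
    ring
  | single t q =>
    refine ⟨t.toFinset, fun A hA => ?_⟩
    simp only [mass_apply, linearCombination_single, smul_eq_mul, Finsupp.single_apply]
    by_cases h : s <+: t
    · obtain ⟨r, rfl⟩ := h
      cases r with
      | nil =>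
        have : ∀ a, ¬ (s ++ [a] <+: s) := fun a h => by simpa using h.length_le
        simp [this]
      | cons b r =>
        have hb : b ∈ A := hA (by simp)
        have : ∀ a, (s ++ [a] <+: s ++ b :: r) ↔ a = b := fun a => by
          rw [List.prefix_append_right_inj]; simp
        simp [this, hb]
    · have h1 : ∀ a, ¬ (s ++ [a] <+: t) := fun a h' => h ((List.prefix_append s [a]).trans h')
      have h2 : t ≠ s := fun h' => h (h' ▸ List.prefix_rfl)
      simp [h, h1, h2]

lemma total_eq (v : List ℕ →₀ ℚ) :
    total v = linearCombination ℚ levelWeight (mass v) + linearCombination ℚ levelWeight v := by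
  induction v using Finsupp.induction_linear with
  | zero => simp
  | add u v hu hv => simp only [map_add, hu, hv]; ring
  | single t q =>
    rw [← mul_one q, ← smul_eq_mul, ← Finsupp.smul_single]
    simp only [map_smul, ← smul_add]
    congr 1
    induction t using List.reverseRecOn with
    | nil => norm_num [mass_single, total, levelWeight]
    | append_singleton t a ih =>
      rw [mass_single_append, map_add]
      simp only [total, linearCombination_single, smul_eq_mul, one_mul] at ih ⊢
      have : levelWeight t = 2 * levelWeight (t ++ [a]) := by
        simp only [levelWeight, List.length_append, List.length_singleton]; ring
      linarith

/-- The node weights are controlled by the defect `treeNorm T v - total v`. -/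
lemma weightedSum_nodeWeight_le (T : Set (List ℕ)) (v : List ℕ →₀ ℚ) :
    weightedSum (nodeWeight T) v ≤ 2 * (treeNorm T v - total v) := by
  have h1 := (le_abs_self _).trans (abs_linearCombination_le levelWeight_nonneg (mass v))
  have h2 := (le_abs_self _).trans (abs_linearCombination_le levelWeight_nonneg v)
  have h3 := weightedSum_mono (two_mul_levelWeight_le T) v
  rw [weightedSum_const_mul] at h3
  rw [treeNorm, total_eq]
  linarith

lemma isRatNorm_treeNorm (T : Set (List ℕ)) :
    (∀ v, 0 ≤ treeNorm T v) ∧ (∀ v, treeNorm T v = 0 ↔ v = 0) ∧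
    (∀ (q : ℚ) v, treeNorm T (q • v) = |q| * treeNorm T v) ∧
    (∀ v w, treeNorm T (v + w) ≤ treeNorm T v + treeNorm T w) := by
  refine ⟨fun v => add_nonneg (weightedSum_nonneg levelWeight_nonneg _)
    (weightedSum_nonneg (nodeWeight_nonneg T) _), fun v => ⟨fun h => ?_, ?_⟩, fun q v => ?_,
    fun u v => ?_⟩
  · ext s
    have h1 := weightedSum_nonneg levelWeight_nonneg (mass v)
    have h2 := le_weightedSum (nodeWeight_nonneg T) v s
    have h3 : nodeWeight T s * |v s| ≤ 0 := by unfold treeNorm at h; linarith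
    exact abs_nonpos_iff.1 (nonpos_of_mul_nonpos_right h3 (nodeWeight_pos T s))
  · rintro rfl
    simp [treeNorm, weightedSum]
  · rw [treeNorm, map_smul, weightedSum_smul, weightedSum_smul, treeNorm]
    ring
  · have h1 := weightedSum_add_le levelWeight_nonneg (mass u) (mass v)
    have h2 := weightedSum_add_le (nodeWeight_nonneg T) u v
    rw [treeNorm, map_add, treeNorm, treeNorm]
    linarith

lemma abs_total_le (T : Set (List ℕ)) (v : List ℕ →₀ ℚ) : |total v| ≤ treeNorm T v := by
  have key : ∀ v, total v ≤ treeNorm T v := fun v => by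
    linarith [weightedSum_nodeWeight_le T v, weightedSum_nonneg (nodeWeight_nonneg T) v]
  refine abs_le.2 ⟨?_, key v⟩
  have h := key ((-1 : ℚ) • v)
  rw [(isRatNorm_treeNorm T).2.2.1, map_smul] at h
  norm_num at h
  linarith

/-- The initial segment of length `n` of a sequence. -/
def initSeg (y : ℕ → ℕ) (n : ℕ) : List ℕ := (List.range n).map y

lemma initSeg_succ (y : ℕ → ℕ) (n : ℕ) : initSeg y (n + 1) = initSeg y n ++ [y n] := by
  simp [initSeg, List.range_succ]

lemma length_initSeg (y : ℕ → ℕ) (n : ℕ) : (initSeg y n).length = n := by simp [initSeg]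

/-- The functional `total` attains its norm in the completion of the tree norm of `T`. -/
def Attains (T : Set (List ℕ)) : Prop :=
  ∃ v : ℕ → (List ℕ →₀ ℚ),
    (∀ ε : ℚ, 0 < ε → ∃ K, ∀ m k, K ≤ m → K ≤ k → treeNorm T (v m - v k) < ε) ∧
    (∀ ε : ℚ, 0 < ε → ∃ K, ∀ k, K ≤ k → |treeNorm T (v k) - 1| < ε) ∧
    (∀ ε : ℚ, 0 < ε → ∃ K, ∀ k, K ≤ k → |total (v k) - 1| < ε)

lemma treeNorm_sub_comm (T : Set (List ℕ)) (u v : List ℕ →₀ ℚ) :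
    treeNorm T (u - v) = treeNorm T (v - u) := by
  have h := (isRatNorm_treeNorm T).2.2.1 (-1) (v - u)
  simpa using h

lemma attains_of_branch {T : Set (List ℕ)} {y : ℕ → ℕ} (hy : ∀ n, initSeg y n ∈ T) :
    Attains T := by
  have hsmall : ∀ ε : ℚ, 0 < ε → ∃ K : ℕ, ∀ k, K ≤ k → 4 * (1 / 2 : ℚ) ^ k < ε := fun ε hε => by
    obtain ⟨K, hK⟩ := exists_pow_lt_of_lt_one (show (0 : ℚ) < ε / 4 by positivity)
      (show (1 / 2 : ℚ) < 1 by norm_num)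
    refine ⟨K, fun k hk => ?_⟩
    have := pow_le_pow_of_le_one (show (0 : ℚ) ≤ 1 / 2 by norm_num) (by norm_num) hk
    linarith
  have hnode : ∀ n, nodeWeight T (initSeg y n) = (1 / 2) ^ n := fun n => by
    rw [nodeWeight, if_pos (hy n), length_initSeg]
  have hlevel : ∀ n, levelWeight (initSeg y n) = (1 / 2) ^ (n + 1) := fun n => by
    rw [levelWeight, length_initSeg]
  have hstep : ∀ n, treeNorm T (single (initSeg y (n + 1)) 1 - single (initSeg y n) 1) ≤
      2 * (1 / 2) ^ n := fun n => by
    have h0 : (0 : ℚ) < (1 / 2) ^ n := by positivity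
    have h1 : mass (single (initSeg y (n + 1)) 1 - single (initSeg y n) 1) =
        single (initSeg y (n + 1)) 1 := by
      rw [map_sub, initSeg_succ, mass_single_append, add_sub_cancel_left]
    have h2 := weightedSum_add_le (nodeWeight_nonneg T) (single (initSeg y (n + 1)) 1)
      ((-1 : ℚ) • single (initSeg y n) 1)
    rw [weightedSum_smul, weightedSum_single, weightedSum_single, hnode, hnode, neg_one_smul,
      ← sub_eq_add_neg] at h2
    rw [treeNorm, h1, weightedSum_single, hlevel]
    simp only [abs_neg, abs_one, mul_one, one_mul, pow_succ] at h2 ⊢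
    linarith
  have hdist : ∀ k j, treeNorm T (single (initSeg y (k + j)) 1 - single (initSeg y k) 1) ≤
      4 * ((1 / 2) ^ k - (1 / 2) ^ (k + j)) := fun k j => by
    induction j with
    | zero => simp [treeNorm, weightedSum]
    | succ j ih =>
      have h := (isRatNorm_treeNorm T).2.2.2
        (single (initSeg y (k + j + 1)) 1 - single (initSeg y (k + j)) 1)
        (single (initSeg y (k + j)) 1 - single (initSeg y k) 1)
      rw [sub_add_sub_cancel] at h
      have h' := hstep (k + j)
      rw [← add_assoc, pow_succ]
      linarith
  have hdist' : ∀ k m, k ≤ m →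
      treeNorm T (single (initSeg y m) 1 - single (initSeg y k) 1) ≤ 4 * (1 / 2) ^ k :=
    fun k m h => by
      obtain ⟨j, rfl⟩ := Nat.exists_eq_add_of_le h
      have h1 := hdist k j
      have h2 : (0 : ℚ) < (1 / 2) ^ (k + j) := by positivity
      linarith
  have htotal : ∀ s, total (single s 1) = 1 := fun s => by simp [total]
  have hmass : ∀ n, weightedSum levelWeight (mass (single (initSeg y n) 1)) ≤
      1 - (1 / 2) ^ (n + 1) := fun n => by
    induction n with
    | zero => norm_num [initSeg, mass_single, weightedSum_single, levelWeight]
    | succ n ih =>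
      have h := weightedSum_add_le levelWeight_nonneg (mass (single (initSeg y n) 1))
        (single (initSeg y (n + 1)) 1)
      rw [initSeg_succ, ← mass_single_append, ← initSeg_succ, weightedSum_single, hlevel,
        abs_one, mul_one] at h
      have : (1 / 2 : ℚ) ^ (n + 1) = 2 * (1 / 2) ^ (n + 1 + 1) := by ring
      linarith
  refine ⟨fun n => single (initSeg y n) 1, fun ε hε => ?_, fun ε hε => ?_, fun ε hε =>
    ⟨0, fun k _ => by simpa [htotal] using hε⟩⟩
  · obtain ⟨K, hK⟩ := hsmall ε hε
    refine ⟨K, fun m k hm hk => ?_⟩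
    rcases le_total k m with h | h
    · exact (hdist' k m h).trans_lt (hK k hk)
    · rw [treeNorm_sub_comm]
      exact (hdist' m k h).trans_lt (hK m hm)
  · obtain ⟨K, hK⟩ := hsmall ε hε
    refine ⟨K, fun k hk => ?_⟩
    have h1 := (le_abs_self _).trans (abs_total_le T (single (initSeg y k) 1))
    rw [htotal] at h1
    have h2 : treeNorm T (single (initSeg y k) 1) ≤ 1 + (1 / 2) ^ k := by
      have h3 := hmass k
      have h4 : (0 : ℚ) < (1 / 2) ^ (k + 1) := by positivity
      rw [treeNorm, weightedSum_single, hnode, abs_one, mul_one]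
      linarith
    have h3 := hK k hk
    have h4 : (0 : ℚ) < (1 / 2) ^ k := by positivity
    rw [abs_of_nonneg (by linarith)]
    linarith

/-- The rational sequence `u` tends to zero. -/
def Vanishes (u : ℕ → ℚ) : Prop := ∀ ε : ℚ, 0 < ε → ∃ K, ∀ k, K ≤ k → |u k| < ε

lemma Vanishes.of_le_mul {u u' : ℕ → ℚ} (hu : Vanishes u) (c : ℚ) (hc : 0 < c)
    (h : ∀ k, |u' k| ≤ c * |u k|) : Vanishes u' := fun ε hε => by
  obtain ⟨K, hK⟩ := hu (ε / c) (by positivity)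
  refine ⟨K, fun k hk => (h k).trans_lt ?_⟩
  have := hK k hk
  rwa [lt_div_iff₀ hc, mul_comm] at this

lemma Vanishes.finset_sum_abs {ι : Type*} {u : ι → ℕ → ℚ} (A : Finset ι)
    (h : ∀ i ∈ A, Vanishes (u i)) : Vanishes fun k => ∑ i ∈ A, |u i k| := by
  classical
  induction A using Finset.induction_on with
  | empty => exact fun ε hε => ⟨0, by simpa using hε⟩
  | insert i A hi ih =>
    intro ε hε
    obtain ⟨K, hK⟩ := h i (by simp) (ε / 2) (by positivity)
    obtain ⟨L, hL⟩ := ih (fun j hj => h j (by simp [hj])) (ε / 2) (by positivity)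
    refine ⟨max K L, fun k hk => ?_⟩
    have h1 := hK k (le_of_max_le_left hk)
    have h2 := (le_abs_self _).trans_lt (hL k (le_of_max_le_right hk))
    simp only [Finset.sum_insert hi] at h2 ⊢
    rw [abs_of_nonneg (by positivity)]
    linarith

lemma sum_abs_mass_child_le (T : Set (List ℕ)) (v : List ℕ →₀ ℚ) (s : List ℕ) (A : Finset ℕ) :
    ∑ a ∈ A, |mass v (s ++ [a])| ≤ 2 ^ (s.length + 2) * treeNorm T v := by
  classical
  have h := sum_le_weightedSum levelWeight_nonneg (mass v) (A.image fun a => s ++ [a])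
  rw [Finset.sum_image (by intro a _ b _ hab; simpa using hab)] at h
  have hw : ∀ a, levelWeight (s ++ [a]) = (2 ^ (s.length + 2))⁻¹ := fun a => by
    simp [levelWeight]
  simp only [hw, ← Finset.mul_sum] at h
  have h2 := weightedSum_nonneg (nodeWeight_nonneg T) v
  have h3 : (2 ^ (s.length + 2))⁻¹ * ∑ a ∈ A, |mass v (s ++ [a])| ≤ treeNorm T v := by
    rw [treeNorm]; linarith
  rwa [inv_mul_le_iff₀ (by positivity)] at h3

/-- Along a Cauchy sequence no mass escapes through infinitely many children. -/
lemma vanishes_mass_of_children {T : Set (List ℕ)} {v : ℕ → (List ℕ →₀ ℚ)}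
    (hv : ∀ ε : ℚ, 0 < ε → ∃ K, ∀ m k, K ≤ m → K ≤ k → treeNorm T (v m - v k) < ε)
    {s : List ℕ} (hs : Vanishes fun k => v k s)
    (hc : ∀ a, Vanishes fun k => mass (v k) (s ++ [a])) :
    Vanishes fun k => mass (v k) s := by
  classical
  intro ε hε
  obtain ⟨K, hK⟩ := hv (ε / 4 / 2 ^ (s.length + 2)) (by positivity)
  have hfin : {a | mass (v K) (s ++ [a]) ≠ 0}.Finite := by
    refine Set.Finite.subset ((mass (v K)).support.finite_toSet.preimage
      (f := fun a => s ++ [a]) ?_) ?_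
    · intro a _ b _ hab
      simpa using hab
    · intro a ha
      simpa using ha
  set B := hfin.toFinset
  obtain ⟨L, hL⟩ := Vanishes.finset_sum_abs B (fun a _ => hc a) (ε / 4) (by positivity)
  obtain ⟨M, hM⟩ := hs (ε / 4) (by positivity)
  refine ⟨max K (max L M), fun k hk => ?_⟩
  simp only [max_le_iff] at hk
  obtain ⟨A, hA⟩ := exists_mass_eq_add_sum (v k) s
  have hdiff : ∑ a ∈ A \ B, |mass (v k) (s ++ [a])| ≤ ε / 4 := by
    have h1 := sum_abs_mass_child_le T (v k - v K) s (A \ B)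
    have h2 := hK k K hk.1 le_rfl
    rw [lt_div_iff₀ (by positivity)] at h2
    have h3 : ∑ a ∈ A \ B, |mass (v k) (s ++ [a])| =
        ∑ a ∈ A \ B, |mass (v k - v K) (s ++ [a])| := by
      refine Finset.sum_congr rfl fun a ha => ?_
      have : mass (v K) (s ++ [a]) = 0 := by
        simpa [B] using (Finset.mem_sdiff.1 ha).2
      rw [map_sub, Finsupp.sub_apply, this, sub_zero]
    rw [h3]
    linarith
  have hB := (le_abs_self _).trans_lt (hL k hk.2.1)
  have hvs := hM k hk.2.2
  beta_reduce at hB hvs ⊢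
  rw [hA (A \ B ∪ B) (by rw [Finset.sdiff_union_self_eq_union]; exact Finset.subset_union_left)]
  have h1 := abs_add_le (v k s) (∑ a ∈ A \ B ∪ B, mass (v k) (s ++ [a]))
  have h2 : |∑ a ∈ A \ B ∪ B, mass (v k) (s ++ [a])| ≤
      ∑ a ∈ A \ B, |mass (v k) (s ++ [a])| + ∑ a ∈ B, |mass (v k) (s ++ [a])| := by
    rw [← Finset.sum_union Finset.sdiff_disjoint]
    exact Finset.abs_sum_le_sum_abs _ _
  linarith

lemma exists_branch_of_attains {T : Set (List ℕ)}
    (hT : ∀ s t, s <+: t → t ∈ T → s ∈ T) (h : Attains T) :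
    ∃ y : ℕ → ℕ, ∀ n, initSeg y n ∈ T := by
  obtain ⟨v, hv, hp, hF⟩ := h
  have hnode : Vanishes fun k => weightedSum (nodeWeight T) (v k) := fun ε hε => by
    obtain ⟨K, hK⟩ := hp (ε / 4) (by positivity)
    obtain ⟨L, hL⟩ := hF (ε / 4) (by positivity)
    refine ⟨max K L, fun k hk => ?_⟩
    have h1 := abs_lt.1 (hK k (le_of_max_le_left hk))
    have h2 := abs_lt.1 (hL k (le_of_max_le_right hk))
    rw [abs_of_nonneg (weightedSum_nonneg (nodeWeight_nonneg T) _)]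
    linarith [weightedSum_nodeWeight_le T (v k)]
  have hcoeff : ∀ s, Vanishes fun k => v k s := fun s => by
    refine hnode.of_le_mul (nodeWeight T s)⁻¹ (inv_pos.2 (nodeWeight_pos T s)) fun k => ?_
    rw [← div_eq_inv_mul, le_div_iff₀ (nodeWeight_pos T s), mul_comm]
    exact (le_weightedSum (nodeWeight_nonneg T) (v k) s).trans (le_abs_self _)
  have houtside : ∀ s, s ∉ T → Vanishes fun k => mass (v k) s := fun s hs => by
    refine hnode.of_le_mul 1 one_pos fun k => ?_
    rw [one_mul, mass_apply]
    refine (abs_linearCombination_le (fun t => by split_ifs <;> norm_num) _).trans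
      ((weightedSum_mono (fun t => ?_) _).trans (le_abs_self _))
    split_ifs with hst
    · rw [nodeWeight, if_neg fun ht => hs (hT s t hst ht)]
    · exact nodeWeight_nonneg T t
  have hchild : ∀ s, ∃ a, ¬ Vanishes (fun k => mass (v k) s) →
      ¬ Vanishes fun k => mass (v k) (s ++ [a]) := fun s => by
    by_contra! hcon
    exact (hcon 0).1 (vanishes_mass_of_children hv (hcoeff s) fun a => (hcon a).2)
  choose g hg using hchild
  let S : ℕ → List ℕ := fun n => n.rec [] fun _ s => s ++ [g s]
  have hS : ∀ n, initSeg (fun k => g (S k)) n = S n := fun n => by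
    induction n with
    | zero => rfl
    | succ n ih => rw [initSeg_succ, ih]
  refine ⟨fun k => g (S k), fun n => ?_⟩
  rw [hS]
  by_contra hn
  refine (?_ : ¬ Vanishes fun k => mass (v k) (S n)) (houtside _ hn)
  clear hn
  induction n with
  | zero =>
    intro h0
    obtain ⟨K, hK⟩ := h0 (1 / 2) (by norm_num)
    obtain ⟨L, hL⟩ := hF (1 / 2) (by norm_num)
    have h1 := abs_lt.1 (hK (max K L) (le_max_left _ _))
    have h2 := abs_lt.1 (hL (max K L) (le_max_right _ _))
    have h3 : mass (v (max K L)) (S 0) = total (v (max K L)) := mass_nil _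
    beta_reduce at h1
    rw [h3] at h1
    linarith
  | succ n ih => exact hg _ ih

/-- Relabelling of the nodes by natural numbers. -/
noncomputable def relabel : (ℕ →₀ ℚ) ≃ₗ[ℚ] (List ℕ →₀ ℚ) :=
  Finsupp.domLCongr (Denumerable.eqv (List ℕ)).symm

/-- The point of `Xspace` associated with a tree. -/
noncomputable def treePoint (T : Set (List ℕ)) : Xspace :=
  ⟨(fun v => treeNorm T (relabel v), fun v => total (relabel v)),
    ⟨fun v => (isRatNorm_treeNorm T).1 _,
      fun v => by rw [(isRatNorm_treeNorm T).2.1, LinearEquiv.map_eq_zero_iff],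
      fun q v => by dsimp only; rw [map_smul, (isRatNorm_treeNorm T).2.2.1],
      fun v w => by dsimp only; rw [map_add]; exact (isRatNorm_treeNorm T).2.2.2 _ _⟩,
    ⟨fun v w => by simp, fun q v => by simp⟩,
    fun v => abs_total_le T _⟩

lemma treePoint_mem_Yset_iff (T : Set (List ℕ)) : treePoint T ∈ Yset ↔ Attains T := by
  constructor
  · rintro ⟨v, h1, h2, h3⟩
    refine ⟨fun k => relabel (v k), fun ε hε => ?_, h2, h3⟩
    simp only [← map_sub]
    exact h1 ε hε
  · rintro ⟨v, h1, h2, h3⟩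
    refine ⟨fun k => relabel.symm (v k), fun ε hε => ?_, fun ε hε => ?_, fun ε hε => ?_⟩
    · simpa [treePoint] using h1 ε hε
    · simpa [treePoint] using h2 ε hε
    · simpa [treePoint] using h3 ε hε

instance : DiscreteTopology ℚ := ⟨rfl⟩

lemma continuous_treePoint {α : Type*} [TopologicalSpace α] {T : α → Set (List ℕ)}
    (hT : ∀ s, IsClopen {x | s ∈ T x}) : Continuous fun x => treePoint (T x) := by
  classical
  have hnode : ∀ s, Continuous fun x => nodeWeight (T x) s := fun s => by
    refine Continuous.if (fun x hx => ?_) continuous_const continuous_const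
    simp [(hT s).frontier_eq] at hx
  refine Continuous.subtype_mk (Continuous.prodMk (continuous_pi fun v => ?_)
    continuous_const) _
  refine (continuous_of_discreteTopology
    (f := fun q : ℚ => weightedSum levelWeight (mass (relabel v)) + q)).comp ?_
  refine continuous_finsetSum _ fun s _ => ?_
  exact (continuous_of_discreteTopology (f := fun q : ℚ => q * |relabel v s|)).comp (hnode s)

/-- The tree of attempts to find a preimage of `x` under `f`. -/
def preimageTree (f : (ℕ → ℕ) → ℕ → ℕ) (x : ℕ → ℕ) : Set (List ℕ) :=
  {s | ∃ y, initSeg y s.length = s ∧ ∀ i < s.length, f y i = x i}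

lemma initSeg_eq_iff (y z : ℕ → ℕ) (n : ℕ) :
    initSeg y n = initSeg z n ↔ ∀ i < n, y i = z i := by
  simp [initSeg]

lemma mem_preimageTree_of_prefix (f : (ℕ → ℕ) → ℕ → ℕ) (x : ℕ → ℕ) (s t : List ℕ)
    (hst : s <+: t) (ht : t ∈ preimageTree f x) : s ∈ preimageTree f x := by
  obtain ⟨y, hy, hf⟩ := ht
  refine ⟨y, ?_, fun i hi => hf i (hi.trans_le hst.length_le)⟩
  rw [List.prefix_iff_eq_take.1 hst, ← hy, initSeg, initSeg, ← List.map_take, List.take_range,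
    List.length_map, List.length_range, min_eq_left hst.length_le]

lemma isClopen_mem_preimageTree (f : (ℕ → ℕ) → ℕ → ℕ) (s : List ℕ) :
    IsClopen {x | s ∈ preimageTree f x} := by
  have h : {x | s ∈ preimageTree f x} = (fun x => initSeg x s.length) ⁻¹'
      {r | ∃ y, initSeg y s.length = s ∧ initSeg (f y) s.length = r} := by
    ext x
    simp [preimageTree, initSeg_eq_iff]
  rw [h]
  let _ : TopologicalSpace (List ℕ) := ⊥
  have : DiscreteTopology (List ℕ) := ⟨rfl⟩
  refine (isClopen_discrete _).preimage ?_
  induction s.length with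
  | zero => exact continuous_const
  | succ n ih =>
    simp only [initSeg_succ]
    exact (continuous_of_discreteTopology (f := fun r : List ℕ × ℕ => r.1 ++ [r.2])).comp
      (ih.prodMk (continuous_apply n))

lemma exists_branch_preimageTree_iff {f : (ℕ → ℕ) → ℕ → ℕ} (hf : Continuous f) (x : ℕ → ℕ) :
    (∃ y, ∀ n, initSeg y n ∈ preimageTree f x) ↔ x ∈ Set.range f := by
  constructor
  · rintro ⟨y, hy⟩
    refine ⟨y, funext fun i => ?_⟩
    choose z hz hzx using hy
    simp only [length_initSeg, initSeg_eq_iff] at hz hzx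
    have hlim : Filter.Tendsto z Filter.atTop (nhds y) := by
      rw [tendsto_pi_nhds]
      intro j
      refine tendsto_const_nhds.congr' ?_
      filter_upwards [Filter.eventually_gt_atTop j] with n hn using (hz n j hn).symm
    have h1 := ((continuous_apply i).comp hf).tendsto y |>.comp hlim
    refine tendsto_nhds_unique h1 (tendsto_const_nhds.congr' ?_)
    filter_upwards [Filter.eventually_gt_atTop i] with n hn using (hzx n i hn).symm
  · rintro ⟨y, rfl⟩
    exact ⟨y, fun n => ⟨y, by rw [length_initSeg], fun _ _ => rfl⟩⟩

lemma contReducibleToY_of_branch {C : Set (ℕ → ℕ)} {T : (ℕ → ℕ) → Set (List ℕ)}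
    (hprefix : ∀ x s t, s <+: t → t ∈ T x → s ∈ T x) (hclopen : ∀ s, IsClopen {x | s ∈ T x})
    (hC : ∀ x, (∃ y, ∀ n, initSeg y n ∈ T x) ↔ x ∈ C) : ContReducibleToY C :=
  ⟨fun x => treePoint (T x), continuous_treePoint hclopen, fun x => by
    rw [treePoint_mem_Yset_iff, ← hC]
    exact ⟨fun ⟨_, hy⟩ => attains_of_branch hy, exists_branch_of_attains (hprefix x)⟩⟩

lemma contReducibleToY_of_analyticSet {C : Set (ℕ → ℕ)} (hC : MeasureTheory.AnalyticSet C) :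
    ContReducibleToY C := by
  rw [MeasureTheory.AnalyticSet] at hC
  rcases hC with rfl | ⟨f, hf, rfl⟩
  · exact contReducibleToY_of_branch (T := fun _ => ∅) (by simp)
      (fun _ => isClopen_empty) (by simp)
  · exact contReducibleToY_of_branch (mem_preimageTree_of_prefix f)
      (isClopen_mem_preimageTree f) (exists_branch_preimageTree_iff hf)

end NormAttaining

/-- Every Borel subset of Baire space is continuously reducible to `Y`. -/
theorem stmt10 (C : Set (ℕ → ℕ)) (hC : @MeasurableSet (ℕ → ℕ) (borel (ℕ → ℕ)) C) :
    ContReducibleToY C := by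
  borelize (ℕ → ℕ)
  exact NormAttaining.contReducibleToY_of_analyticSet hC.analyticSet
end

section
/- The set Y is not a Borel subset of the space X, i.e. Y does not belong to the Borel σ-algebra of the topological space X. -/
open Filter Topology

section WeightedSum

variable {ι : Type*}

/-- The weighted `ℓ¹` seminorm on finitely supported rational functions. -/
def weightedSum (ω : ι → ℚ) (v : ι →₀ ℚ) : ℚ := v.sum fun t x => ω t * |x|

theorem weightedSum_eq_sum (ω : ι → ℚ) {v : ι →₀ ℚ} {U : Finset ι} (h : v.support ⊆ U) :
    weightedSum ω v = ∑ t ∈ U, ω t * |v t| :=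
  Finsupp.sum_of_support_subset _ h _ (by simp)

theorem weightedSum_zero (ω : ι → ℚ) : weightedSum ω 0 = 0 := by
  simp [weightedSum]

theorem weightedSum_single (ω : ι → ℚ) (t : ι) (x : ℚ) :
    weightedSum ω (Finsupp.single t x) = ω t * |x| := by
  simp [weightedSum]

theorem weightedSum_nonneg {ω : ι → ℚ} (hω : ∀ t, 0 ≤ ω t) (v : ι →₀ ℚ) :
    0 ≤ weightedSum ω v :=
  Finset.sum_nonneg fun t _ => mul_nonneg (hω t) (abs_nonneg _)

theorem weightedSum_smul (ω : ι → ℚ) (q : ℚ) (v : ι →₀ ℚ) :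
    weightedSum ω (q • v) = |q| * weightedSum ω v := by
  rw [weightedSum_eq_sum ω (Finsupp.support_smul (b := q) (g := v)),
    weightedSum_eq_sum ω (Finset.Subset.refl v.support), Finset.mul_sum]
  refine Finset.sum_congr rfl fun t _ => ?_
  rw [Finsupp.smul_apply, smul_eq_mul, abs_mul]
  ring

theorem weightedSum_add_le {ω : ι → ℚ} (hω : ∀ t, 0 ≤ ω t) (v u : ι →₀ ℚ) :
    weightedSum ω (v + u) ≤ weightedSum ω v + weightedSum ω u := by
  classical
  rw [weightedSum_eq_sum ω (Finsupp.support_add (g₁ := v) (g₂ := u)),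
    weightedSum_eq_sum ω (Finset.subset_union_left (s₁ := v.support) (s₂ := u.support)),
    weightedSum_eq_sum ω (Finset.subset_union_right (s₁ := v.support) (s₂ := u.support)),
    ← Finset.sum_add_distrib]
  refine Finset.sum_le_sum fun t _ => ?_
  rw [← mul_add]
  exact mul_le_mul_of_nonneg_left (abs_add_le _ _) (hω t)

theorem weightedSum_mono {ω ω' : ι → ℚ} (h : ∀ t, ω t ≤ ω' t) (v : ι →₀ ℚ) :
    weightedSum ω v ≤ weightedSum ω' v :=
  Finset.sum_le_sum fun t _ => mul_le_mul_of_nonneg_right (h t) (abs_nonneg _)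

theorem mul_abs_apply_le_weightedSum {ω : ι → ℚ} (hω : ∀ t, 0 ≤ ω t) (v : ι →₀ ℚ) (t : ι) :
    ω t * |v t| ≤ weightedSum ω v := by
  by_cases ht : t ∈ v.support
  · exact Finset.single_le_sum (f := fun t => ω t * |v t|)
      (fun s _ => mul_nonneg (hω s) (abs_nonneg _)) ht
  · rw [Finsupp.notMem_support_iff.1 ht]
    simpa using weightedSum_nonneg hω v

theorem weightedSum_le_sum_add {ω : ι → ℚ} (hω : ∀ t, 0 ≤ ω t) (v u : ι →₀ ℚ) :
    weightedSum ω v ≤ ∑ t ∈ u.support, ω t * |v t| + weightedSum ω (v - u) := by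
  classical
  have hvu : (v - u).support ⊆ v.support ∪ u.support := Finsupp.support_sub
  rw [weightedSum_eq_sum ω hvu,
    weightedSum_eq_sum ω (Finset.subset_union_left (s₁ := v.support) (s₂ := u.support)),
    Finset.sum_subset_zero_on_sdiff (f := fun t => ω t * |v t|)
      (g := fun t => if t ∈ u.support then ω t * |v t| else 0)
      (Finset.subset_union_right (s₁ := v.support))
      (fun t ht => if_neg (Finset.mem_sdiff.1 ht).2) (fun t ht => (if_pos ht).symm),
    ← Finset.sum_add_distrib]
  refine Finset.sum_le_sum fun t _ => ?_
  split_ifs with ht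
  · exact le_add_of_nonneg_right (mul_nonneg (hω t) (abs_nonneg _))
  · rw [Finsupp.sub_apply, Finsupp.notMem_support_iff.1 ht]
    simp

end WeightedSum

/-- The weight of a tree node. A node is the reversed list of its labels, so that the parent of
`a :: t` is `t`. -/
def nodeWeight (t : List ℕ) : ℚ := (1 / 2) ^ (t.length + 1)

theorem nodeWeight_pos (t : List ℕ) : 0 < nodeWeight t := by
  unfold nodeWeight; positivity

theorem nodeWeight_cons (a : ℕ) (t : List ℕ) : nodeWeight t = 2 * nodeWeight (a :: t) := by
  simp only [nodeWeight, List.length_cons, pow_succ]; ring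

/-- The basis vector of the parent of a node, and `0` for the root. -/
noncomputable def parentVec : List ℕ → (List ℕ →₀ ℚ)
  | [] => 0
  | _ :: t => Finsupp.single t 1

/-- The map sending a vector `v` to the function `t ↦ ∑ a, v (a :: t)`. -/
noncomputable def childSum : (List ℕ →₀ ℚ) →ₗ[ℚ] (List ℕ →₀ ℚ) :=
  Finsupp.linearCombination ℚ parentVec

/-- The weights restricted to the children of a node. -/
def childWeight (t : List ℕ) : List ℕ → ℚ
  | [] => 0
  | a :: s => if s = t then nodeWeight (a :: s) else 0

theorem childWeight_nonneg (t s : List ℕ) : 0 ≤ childWeight t s := by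
  cases s with
  | nil => exact le_rfl
  | cons a s =>
    simp only [childWeight]
    split_ifs
    exacts [(nodeWeight_pos _).le, le_rfl]

theorem childWeight_le (t s : List ℕ) : childWeight t s ≤ nodeWeight s := by
  cases s with
  | nil => exact (nodeWeight_pos _).le
  | cons a s =>
    simp only [childWeight]
    split_ifs
    exacts [le_rfl, (nodeWeight_pos _).le]

theorem nodeWeight_mul_abs_childSum_le (v : List ℕ →₀ ℚ) (t : List ℕ) :
    nodeWeight t * |childSum v t| ≤ 2 * weightedSum (childWeight t) v := by
  rw [childSum, Finsupp.linearCombination_apply, Finsupp.sum, Finsupp.finsetSum_apply,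
    weightedSum, Finsupp.sum, Finset.mul_sum]
  refine (mul_le_mul_of_nonneg_left (Finset.abs_sum_le_sum_abs _ _)
    (nodeWeight_pos t).le).trans ?_
  rw [Finset.mul_sum]
  refine Finset.sum_le_sum fun s _ => ?_
  cases s with
  | nil => simp [parentVec, childWeight]
  | cons a s =>
    by_cases h : s = t
    · subst h
      simp [parentVec, childWeight, nodeWeight_cons a s, mul_assoc]
    · simp [parentVec, childWeight, h]

/-- The weights restricted to the nodes outside `T`. -/
def outsideWeight (T : List ℕ → Bool) (t : List ℕ) : ℚ := if T t then 0 else nodeWeight t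

theorem outsideWeight_nonneg (T : List ℕ → Bool) (t : List ℕ) : 0 ≤ outsideWeight T t := by
  unfold outsideWeight
  split_ifs
  exacts [le_rfl, (nodeWeight_pos _).le]

/-- The seminorm measuring how far `v` is from being a flow supported in `T`. -/
noncomputable def flowDefect (T : List ℕ → Bool) (v : List ℕ →₀ ℚ) : ℚ :=
  weightedSum nodeWeight (v - childSum v) + weightedSum (outsideWeight T) v

theorem flowDefect_nonneg (T : List ℕ → Bool) (v : List ℕ →₀ ℚ) : 0 ≤ flowDefect T v :=
  add_nonneg (weightedSum_nonneg (fun t => (nodeWeight_pos t).le) _)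
    (weightedSum_nonneg (outsideWeight_nonneg T) _)

theorem flowDefect_smul (T : List ℕ → Bool) (q : ℚ) (v : List ℕ →₀ ℚ) :
    flowDefect T (q • v) = |q| * flowDefect T v := by
  rw [flowDefect, flowDefect, map_smul, ← smul_sub, weightedSum_smul, weightedSum_smul, mul_add]

theorem flowDefect_add_le (T : List ℕ → Bool) (v u : List ℕ →₀ ℚ) :
    flowDefect T (v + u) ≤ flowDefect T v + flowDefect T u := by
  have h₁ := weightedSum_add_le (fun t => (nodeWeight_pos t).le) (v - childSum v) (u - childSum u)
  have h₂ := weightedSum_add_le (outsideWeight_nonneg T) v u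
  rw [flowDefect, flowDefect, flowDefect, map_add, add_sub_add_comm]
  linarith

/-- The norm attached to `T`, for which the evaluation at the root attains its norm exactly when
`T` has an infinite branch. -/
noncomputable def treeNorm (T : List ℕ → Bool) (v : List ℕ →₀ ℚ) : ℚ :=
  max (weightedSum nodeWeight v) (|v []| + flowDefect T v)

theorem treeNorm_smul (T : List ℕ → Bool) (q : ℚ) (v : List ℕ →₀ ℚ) :
    treeNorm T (q • v) = |q| * treeNorm T v := by
  rw [treeNorm, treeNorm, weightedSum_smul, flowDefect_smul, Finsupp.smul_apply, smul_eq_mul,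
    abs_mul, ← mul_add, mul_max_of_nonneg _ _ (abs_nonneg q)]

theorem treeNorm_add_le (T : List ℕ → Bool) (v u : List ℕ →₀ ℚ) :
    treeNorm T (v + u) ≤ treeNorm T v + treeNorm T u := by
  refine max_le ((weightedSum_add_le (fun t => (nodeWeight_pos t).le) v u).trans
    (add_le_add (le_max_left _ _) (le_max_left _ _))) ?_
  refine le_trans ?_ (add_le_add (le_max_right _ _) (le_max_right _ _))
  have h₁ := flowDefect_add_le T v u
  have h₂ := abs_add_le (v []) (u [])
  rw [Finsupp.add_apply]
  linarith

theorem nodeWeight_mul_abs_apply_le_treeNorm (T : List ℕ → Bool) (v : List ℕ →₀ ℚ)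
    (t : List ℕ) : nodeWeight t * |v t| ≤ treeNorm T v :=
  (mul_abs_apply_le_weightedSum (fun t => (nodeWeight_pos t).le) v t).trans (le_max_left _ _)

theorem treeNorm_nonneg (T : List ℕ → Bool) (v : List ℕ →₀ ℚ) : 0 ≤ treeNorm T v :=
  (weightedSum_nonneg (fun t => (nodeWeight_pos t).le) v).trans (le_max_left _ _)

theorem treeNorm_eq_zero_iff (T : List ℕ → Bool) (v : List ℕ →₀ ℚ) :
    treeNorm T v = 0 ↔ v = 0 := by
  constructor
  · intro h
    ext t
    have ht := nodeWeight_mul_abs_apply_le_treeNorm T v t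
    rw [h] at ht
    exact abs_nonpos_iff.1 (nonpos_of_mul_nonpos_right ht (nodeWeight_pos t))
  · rintro rfl
    simp [treeNorm, flowDefect, weightedSum_zero]

theorem abs_apply_nil_add_flowDefect_le (T : List ℕ → Bool) (v : List ℕ →₀ ℚ) :
    |v []| + flowDefect T v ≤ treeNorm T v :=
  le_max_right _ _

theorem abs_apply_nil_le_treeNorm (T : List ℕ → Bool) (v : List ℕ →₀ ℚ) :
    |v []| ≤ treeNorm T v :=
  (le_add_of_nonneg_right (flowDefect_nonneg T v)).trans (le_max_right _ _)

/-- The evaluation at the root attains its norm in the completion for the norm attached to `T`. -/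
def RootAttains (T : List ℕ → Bool) : Prop :=
  ∃ v : ℕ → List ℕ →₀ ℚ,
    (∀ ε : ℚ, 0 < ε → ∃ K, ∀ m k, K ≤ m → K ≤ k → treeNorm T (v m - v k) < ε) ∧
    (∀ ε : ℚ, 0 < ε → ∃ K, ∀ k, K ≤ k → |treeNorm T (v k) - 1| < ε) ∧
    (∀ ε : ℚ, 0 < ε → ∃ K, ∀ k, K ≤ k → |v k [] - 1| < ε)

/-- The reversed list of the first `n` values of a sequence. -/
def revPrefix {α : Type*} (x : ℕ → α) : ℕ → List α
  | 0 => []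
  | n + 1 => x n :: revPrefix x n

theorem length_revPrefix {α : Type*} (x : ℕ → α) (n : ℕ) : (revPrefix x n).length = n := by
  induction n with
  | zero => rfl
  | succ n ih => simp [revPrefix, ih]

theorem revPrefix_eq_iff {α : Type*} {x y : ℕ → α} {n : ℕ} :
    revPrefix x n = revPrefix y n ↔ ∀ i < n, x i = y i := by
  induction n with
  | zero => simp [revPrefix]
  | succ n ih =>
    rw [revPrefix, revPrefix, List.cons.injEq, ih, Nat.forall_lt_succ_right]
    tauto

theorem nodeWeight_revPrefix (y : ℕ → ℕ) (n : ℕ) :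
    nodeWeight (revPrefix y n) = (1 / 2) ^ (n + 1) := by
  rw [nodeWeight, length_revPrefix]

/-- The sum of the first `k` basis vectors along the branch `y`. -/
noncomputable def branchVec (y : ℕ → ℕ) : ℕ → List ℕ →₀ ℚ
  | 0 => 0
  | k + 1 => branchVec y k + Finsupp.single (revPrefix y k) 1

theorem branchVec_sub_childSum (y : ℕ → ℕ) (k : ℕ) :
    branchVec y (k + 1) - childSum (branchVec y (k + 1)) = Finsupp.single (revPrefix y k) 1 := by
  induction k with
  | zero => simp [branchVec, revPrefix, childSum, parentVec]
  | succ k ih =>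
    have h : childSum (Finsupp.single (revPrefix y (k + 1)) 1)
        = Finsupp.single (revPrefix y k) 1 := by
      simp [childSum, revPrefix, parentVec]
    rw [branchVec, map_add, add_sub_add_comm, ih, h]
    abel

theorem branchVec_apply_nil (y : ℕ → ℕ) (k : ℕ) : branchVec y (k + 1) [] = 1 := by
  induction k with
  | zero => simp [branchVec, revPrefix]
  | succ k ih =>
    rw [branchVec, Finsupp.add_apply, ih]
    simp [revPrefix]

theorem weightedSum_branchVec_add_sub_le (y : ℕ → ℕ) (k j : ℕ) :
    weightedSum nodeWeight (branchVec y (k + j) - branchVec y k)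
      ≤ (1 / 2) ^ k - (1 / 2) ^ (k + j) := by
  induction j with
  | zero => simp [weightedSum_zero]
  | succ j ih =>
    have h := weightedSum_add_le (fun t => (nodeWeight_pos t).le)
      (branchVec y (k + j) - branchVec y k) (Finsupp.single (revPrefix y (k + j)) 1)
    rw [weightedSum_single, nodeWeight_revPrefix] at h
    rw [← add_assoc, branchVec, add_sub_right_comm]
    refine h.trans ?_
    rw [pow_succ]
    norm_num
    norm_num at ih
    linarith

theorem flowDefect_branchVec {T : List ℕ → Bool} {y : ℕ → ℕ} (hy : ∀ n, T (revPrefix y n) = true)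
    (k : ℕ) : flowDefect T (branchVec y (k + 1)) = (1 / 2) ^ (k + 1) := by
  have h : ∀ k, weightedSum (outsideWeight T) (branchVec y k) = 0 := by
    intro k
    refine le_antisymm ?_ (weightedSum_nonneg (outsideWeight_nonneg T) _)
    induction k with
    | zero => simp [branchVec, weightedSum_zero]
    | succ k ih =>
      refine (weightedSum_add_le (outsideWeight_nonneg T) _ _).trans ?_
      rw [weightedSum_single, outsideWeight, if_pos (hy k)]
      simpa using ih
  rw [flowDefect, h, branchVec_sub_childSum, weightedSum_single, nodeWeight_revPrefix]
  simp

theorem exists_forall_ge_half_pow_lt {ε : ℚ} (hε : 0 < ε) :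
    ∃ K : ℕ, ∀ k ≥ K, (1 / 2 : ℚ) ^ k < ε := by
  obtain ⟨K, hK⟩ := exists_pow_lt_of_lt_one hε (by norm_num : (1 / 2 : ℚ) < 1)
  exact ⟨K, fun k hk =>
    (pow_le_pow_of_le_one (by norm_num) (by norm_num) hk).trans_lt hK⟩

theorem treeNorm_branchVec_sub_le {T : List ℕ → Bool} {y : ℕ → ℕ}
    (hy : ∀ n, T (revPrefix y n) = true) {k m : ℕ} (hkm : k ≤ m) :
    treeNorm T (branchVec y (m + 1) - branchVec y (k + 1)) ≤ (1 / 2) ^ k := by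
  obtain ⟨j, rfl⟩ := Nat.exists_eq_add_of_le hkm
  have hk : (0 : ℚ) < (1 / 2) ^ k := by positivity
  refine max_le ?_ ?_
  · have h := weightedSum_branchVec_add_sub_le y (k + 1) j
    rw [add_right_comm k 1 j] at h
    have hj : (0 : ℚ) < (1 / 2) ^ (k + j + 1) := by positivity
    refine h.trans ?_
    rw [pow_succ _ k]
    linarith
  · have h := flowDefect_add_le T (branchVec y (k + j + 1)) ((-1 : ℚ) • branchVec y (k + 1))
    rw [flowDefect_smul, flowDefect_branchVec hy, flowDefect_branchVec hy, neg_one_smul,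
      ← sub_eq_add_neg] at h
    have hj : (1 / 2 : ℚ) ^ (k + j + 1) ≤ (1 / 2) ^ (k + 1) :=
      pow_le_pow_of_le_one (by norm_num) (by norm_num) (by omega)
    rw [Finsupp.sub_apply, branchVec_apply_nil, branchVec_apply_nil, sub_self, abs_zero, zero_add]
    refine h.trans ?_
    rw [abs_neg, abs_one, one_mul]
    rw [pow_succ _ k] at hj ⊢
    linarith

theorem rootAttains_of_branch {T : List ℕ → Bool} {y : ℕ → ℕ}
    (hy : ∀ n, T (revPrefix y n) = true) : RootAttains T := by
  refine ⟨fun k => branchVec y (k + 1), fun ε hε => ?_, fun ε hε => ?_, fun ε hε => ?_⟩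
  · obtain ⟨K, hK⟩ := exists_forall_ge_half_pow_lt hε
    refine ⟨K, fun m k hm hk => ?_⟩
    rcases le_total k m with h | h
    · exact (treeNorm_branchVec_sub_le hy h).trans_lt (hK k hk)
    · have h' := treeNorm_smul T (-1) (branchVec y (k + 1) - branchVec y (m + 1))
      rw [neg_one_smul, neg_sub, abs_neg, abs_one, one_mul] at h'
      rw [h']
      exact (treeNorm_branchVec_sub_le hy h).trans_lt (hK m hm)
  · obtain ⟨K, hK⟩ := exists_forall_ge_half_pow_lt hε
    refine ⟨K, fun k hk => ?_⟩
    have h₁ := abs_apply_nil_le_treeNorm T (branchVec y (k + 1))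
    rw [branchVec_apply_nil, abs_one] at h₁
    have h₂ : treeNorm T (branchVec y (k + 1)) ≤ 1 + (1 / 2) ^ (k + 1) := by
      refine max_le ?_ ?_
      · have h := weightedSum_branchVec_add_sub_le y 0 (k + 1)
        have hp : (0 : ℚ) < (1 / 2) ^ (k + 1) := by positivity
        rw [zero_add, branchVec, sub_zero, pow_zero] at h
        linarith
      · rw [branchVec_apply_nil, flowDefect_branchVec hy, abs_one]
    rw [abs_of_nonneg (by linarith)]
    have h₃ := hK (k + 1) (by omega)
    linarith
  · exact ⟨0, fun k _ => by simpa [branchVec_apply_nil] using hε⟩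

/-- A sequence of vectors tends to zero at a given node. -/
def VanishesAt (v : ℕ → List ℕ →₀ ℚ) (t : List ℕ) : Prop :=
  ∀ ε : ℚ, 0 < ε → ∀ᶠ k in atTop, |v k t| < ε

theorem eventually_weightedSum_childWeight_lt {v : ℕ → List ℕ →₀ ℚ} {T : List ℕ → Bool}
    (hv : ∀ ε : ℚ, 0 < ε → ∃ K, ∀ m k, K ≤ m → K ≤ k → treeNorm T (v m - v k) < ε)
    {t : List ℕ} (ht : ∀ a, VanishesAt v (a :: t)) {ε : ℚ} (hε : 0 < ε) :
    ∀ᶠ k in atTop, weightedSum (childWeight t) (v k) < ε := by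
  obtain ⟨K, hK⟩ := hv (ε / 2) (half_pos hε)
  set S := (v K).support
  have hS : (0 : ℚ) < S.card + 1 := by positivity
  have hsum : ∀ᶠ k in atTop, ∀ s ∈ S, childWeight t s * |v k s| ≤ ε / 2 / (S.card + 1) := by
    refine (eventually_all_finset S).2 fun s _ => ?_
    by_cases hs : ∃ a, s = a :: t
    · obtain ⟨a, rfl⟩ := hs
      filter_upwards [ht a _ (div_pos (half_pos hε) hS)] with k hk
      have h1 : childWeight t (a :: t) ≤ 1 :=
        (childWeight_le t _).trans (pow_le_one₀ (by norm_num) (by norm_num))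
      exact (mul_le_of_le_one_left (abs_nonneg _) h1).trans hk.le
    · have h0 : childWeight t s = 0 := by
        cases s with
        | nil => rfl
        | cons a s => exact if_neg fun h => hs ⟨a, by rw [h]⟩
      exact Eventually.of_forall fun k => by rw [h0, zero_mul]; positivity
  filter_upwards [hsum, eventually_ge_atTop K] with k hk hKk
  have h₁ := weightedSum_le_sum_add (childWeight_nonneg t) (v k) (v K)
  have h₂ := Finset.sum_le_card_nsmul S _ _ hk
  have h₃ : weightedSum (childWeight t) (v k - v K) < ε / 2 :=
    ((weightedSum_mono (childWeight_le t) _).trans (le_max_left _ _)).trans_lt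
      (hK k K hKk le_rfl)
  have h₄ : S.card • (ε / 2 / (S.card + 1)) ≤ ε / 2 := by
    rw [nsmul_eq_mul, mul_div_assoc', div_le_iff₀ hS]
    nlinarith
  linarith

theorem exists_branch_of_rootAttains {T : List ℕ → Bool} (h : RootAttains T) :
    ∃ y : ℕ → ℕ, ∀ n, T (revPrefix y n) = true := by
  obtain ⟨v, hcauchy, hnorm, hroot⟩ := h
  have hdefect : ∀ ε : ℚ, 0 < ε → ∀ᶠ k in atTop, flowDefect T (v k) < ε := by
    intro ε hε
    obtain ⟨K₁, hK₁⟩ := hnorm (ε / 2) (half_pos hε)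
    obtain ⟨K₂, hK₂⟩ := hroot (ε / 2) (half_pos hε)
    filter_upwards [eventually_ge_atTop K₁, eventually_ge_atTop K₂] with k h₁ h₂
    have h₃ := abs_lt.1 (hK₁ k h₁)
    have h₄ := abs_lt.1 (hK₂ k h₂)
    have h₅ := abs_apply_nil_add_flowDefect_le T (v k)
    have h₆ := le_abs_self (v k [])
    linarith
  have hmem : ∀ t, ¬ VanishesAt v t → T t = true := by
    intro t ht
    by_contra hT
    refine ht fun ε hε => ?_
    filter_upwards [hdefect _ (mul_pos (nodeWeight_pos t) hε)] with k hk
    have h₁ := mul_abs_apply_le_weightedSum (outsideWeight_nonneg T) (v k) t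
    have h₂ := weightedSum_nonneg (fun t => (nodeWeight_pos t).le) (v k - childSum (v k))
    rw [outsideWeight, if_neg hT] at h₁
    rw [flowDefect] at hk
    exact lt_of_mul_lt_mul_left (by linarith) (nodeWeight_pos t).le
  have hchild : ∀ t, ¬ VanishesAt v t → ∃ a, ¬ VanishesAt v (a :: t) := by
    intro t ht
    by_contra! hc
    refine ht fun ε hε => ?_
    have hw := mul_pos (nodeWeight_pos t) hε
    filter_upwards [hdefect _ (half_pos hw),
      eventually_weightedSum_childWeight_lt hcauchy hc (half_pos (half_pos hw))] with k h₁ h₂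
    have h₃ := mul_abs_apply_le_weightedSum (fun t => (nodeWeight_pos t).le)
      (v k - childSum (v k)) t
    have h₄ := weightedSum_nonneg (outsideWeight_nonneg T) (v k)
    have h₅ := nodeWeight_mul_abs_childSum_le (v k) t
    rw [flowDefect] at h₁
    have h₆ : |v k t| ≤ |(v k - childSum (v k)) t| + |childSum (v k) t| := by
      simpa using abs_add_le ((v k - childSum (v k)) t) (childSum (v k) t)
    have h₇ := mul_le_mul_of_nonneg_left h₆ (nodeWeight_pos t).le
    rw [mul_add] at h₇
    exact lt_of_mul_lt_mul_left (by linarith) (nodeWeight_pos t).le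
  have hnil : ¬ VanishesAt v [] := by
    intro h0
    obtain ⟨K, hK⟩ := hroot (1 / 2) (by norm_num)
    obtain ⟨k, h₁, h₂⟩ := ((h0 (1 / 2) (by norm_num)).and (eventually_ge_atTop K)).exists
    have h₃ := abs_lt.1 h₁
    have h₄ := abs_lt.1 (hK k h₂)
    linarith
  choose! label hlabel using hchild
  let node : ℕ → List ℕ := fun n => n.rec [] fun _ t => label t :: t
  have hnode : ∀ n, ¬ VanishesAt v (node n) := by
    intro n
    induction n with
    | zero => exact hnil
    | succ n ih => exact hlabel _ ih
  have hbranch : ∀ n, revPrefix (fun n => label (node n)) n = node n := by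
    intro n
    induction n with
    | zero => rfl
    | succ n ih => rw [revPrefix, ih]
  exact ⟨fun n => label (node n), fun n => by rw [hbranch]; exact hmem _ (hnode n)⟩

/-- Relabelling of the coordinates of `ℕ →₀ ℚ` by tree nodes. -/
noncomputable def nodeEquiv : (ℕ →₀ ℚ) ≃ₗ[ℚ] (List ℕ →₀ ℚ) :=
  Finsupp.domLCongr (Denumerable.eqv (List ℕ)).symm

/-- The point of `Xspace` attached to a set of tree nodes. -/
noncomputable def treePoint (T : List ℕ → Bool) : Xspace :=
  ⟨(fun v => treeNorm T (nodeEquiv v), fun v => nodeEquiv v []),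
    { nonneg := fun v => treeNorm_nonneg T _
      eq_zero_iff := fun v => (treeNorm_eq_zero_iff T _).trans nodeEquiv.map_eq_zero_iff
      smul_eq := fun q v => by simp only [map_smul, treeNorm_smul]
      add_le := fun v u => by simpa only [map_add] using treeNorm_add_le T _ _ },
    { map_add := fun v u => by simp only [map_add, Finsupp.add_apply]
      map_smul := fun q v => by simp only [map_smul, Finsupp.smul_apply] },
    fun v => abs_apply_nil_le_treeNorm T _⟩

theorem treePoint_mem_Yset_iff (T : List ℕ → Bool) :
    treePoint T ∈ Yset ↔ ∃ y : ℕ → ℕ, ∀ n, T (revPrefix y n) = true := by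
  constructor
  · rintro ⟨v, h₁, h₂, h₃⟩
    refine exists_branch_of_rootAttains ⟨fun k => nodeEquiv (v k), fun ε hε => ?_, h₂, h₃⟩
    obtain ⟨K, hK⟩ := h₁ ε hε
    refine ⟨K, fun m k hm hk => ?_⟩
    rw [← map_sub]
    exact hK m k hm hk
  · rintro ⟨y, hy⟩
    obtain ⟨v, h₁, h₂, h₃⟩ := rootAttains_of_branch hy
    refine ⟨fun k => nodeEquiv.symm (v k), fun ε hε => ?_, fun ε hε => ?_, fun ε hε => ?_⟩
    · obtain ⟨K, hK⟩ := h₁ ε hε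
      exact ⟨K, fun m k hm hk => by simpa [treePoint] using hK m k hm hk⟩
    · obtain ⟨K, hK⟩ := h₂ ε hε
      exact ⟨K, fun k hk => by simpa [treePoint] using hK k hk⟩
    · obtain ⟨K, hK⟩ := h₃ ε hε
      exact ⟨K, fun k hk => by simpa [treePoint] using hK k hk⟩

theorem treeNorm_congr {T T' : List ℕ → Bool} {v : List ℕ →₀ ℚ}
    (h : ∀ t ∈ v.support, T t = T' t) : treeNorm T v = treeNorm T' v := by
  have : weightedSum (outsideWeight T) v = weightedSum (outsideWeight T') v :=
    Finset.sum_congr rfl fun t ht => by simp only [outsideWeight, h t ht]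
  rw [treeNorm, treeNorm, flowDefect, flowDefect, this]

theorem continuous_treePoint {P : Type*} [TopologicalSpace P] {T : P → List ℕ → Bool}
    (hT : ∀ c t, ∀ᶠ d in 𝓝 c, T d t = T c t) : Continuous fun c => treePoint (T c) := by
  refine Continuous.subtype_mk (Continuous.prodMk (continuous_pi fun v => ?_)
    continuous_const) _
  refine ((IsLocallyConstant.iff_eventually_eq _).2 fun c => ?_).continuous
  filter_upwards [(eventually_all_finset (nodeEquiv v).support).2 fun t _ => hT c t] with d hd
  exact treeNorm_congr hd

/-- The diagonal tree coded by `c`: the code is read along initial segments of itself. -/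
def diagTree (c : ℕ → Bool) (t : List ℕ) : Bool :=
  c (Encodable.encode (revPrefix c t.length, t))

theorem eventually_revPrefix_eq {α : Type*} [TopologicalSpace α] [DiscreteTopology α]
    (x : ℕ → α) (n : ℕ) : ∀ᶠ y in 𝓝 x, revPrefix y n = revPrefix x n := by
  simp only [revPrefix_eq_iff]
  refine (eventually_all_finite (Set.finite_lt_nat n)).2 fun i _ => ?_
  exact (continuous_apply i).continuousAt.eventually (eventually_of_mem
    (mem_nhds_discrete.2 (Set.mem_singleton (x i))) fun _ h => h)

theorem eventually_diagTree_eq (c : ℕ → Bool) (t : List ℕ) :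
    ∀ᶠ d in 𝓝 c, diagTree d t = diagTree c t := by
  have h := eventually_revPrefix_eq c (Encodable.encode (revPrefix c t.length, t) + 1)
  filter_upwards [eventually_revPrefix_eq c t.length, h] with d h₁ h₂
  rw [diagTree, diagTree, h₁]
  exact revPrefix_eq_iff.1 h₂ _ (Nat.lt_succ_self _)

theorem tendsto_of_revPrefix_eq {α : Type*} [TopologicalSpace α] {x : ℕ → ℕ → α} {y : ℕ → α}
    (h : ∀ n, revPrefix (x n) n = revPrefix y n) : Tendsto x atTop (𝓝 y) := by
  refine tendsto_pi_nhds.2 fun i => tendsto_const_nhds.congr' ?_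
  filter_upwards [eventually_gt_atTop i] with n hn
  exact (revPrefix_eq_iff.1 (h n) i hn).symm

theorem not_analyticSet_compl_diagTree :
    ¬ MeasureTheory.AnalyticSet {c | ∃ y : ℕ → ℕ, ∀ n, diagTree c (revPrefix y n) = true}ᶜ := by
  classical
  rw [MeasureTheory.AnalyticSet]
  rintro (h | ⟨f, hf, hrange⟩)
  · have : (fun _ => false : ℕ → Bool) ∈
        {c | ∃ y : ℕ → ℕ, ∀ n, diagTree c (revPrefix y n) = true}ᶜ := by
      simp [diagTree]
    rw [h] at this
    exact this
  · let c : ℕ → Bool := fun m =>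
      decide (∃ y n, m = Encodable.encode (revPrefix (f y) n, revPrefix y n))
    have hc : ∀ z n, diagTree c (revPrefix z n) = true ↔
        ∃ y, revPrefix (f y) n = revPrefix c n ∧ revPrefix y n = revPrefix z n := by
      intro z n
      rw [diagTree, length_revPrefix]
      simp only [c, decide_eq_true_eq, Encodable.encode_inj, Prod.mk.injEq]
      constructor
      · rintro ⟨y, m, h₁, h₂⟩
        have hm := congrArg List.length h₂
        rw [length_revPrefix, length_revPrefix] at hm
        subst hm
        exact ⟨y, h₁.symm, h₂.symm⟩
      · rintro ⟨y, h₁, h₂⟩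
        exact ⟨y, n, h₁.symm, h₂.symm⟩
    have hmem : c ∉ Set.range f := by
      intro hcf
      have hcf' := hcf
      rw [hrange] at hcf'
      obtain ⟨y, hy⟩ := hcf
      exact hcf' ⟨y, fun n => (hc y n).2 ⟨y, by rw [hy], rfl⟩⟩
    have hD : c ∈ {c | ∃ y : ℕ → ℕ, ∀ n, diagTree c (revPrefix y n) = true} := by
      rwa [hrange, Set.notMem_compl_iff] at hmem
    obtain ⟨z, hz⟩ := hD
    choose y h₁ h₂ using fun n => (hc z n).1 (hz n)
    exact hmem ⟨z, tendsto_nhds_unique ((hf.tendsto z).comp (tendsto_of_revPrefix_eq h₂))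
      (tendsto_of_revPrefix_eq h₁)⟩

/-- The set `Y` is not a Borel subset of the space `X`. -/
theorem stmt11 : ¬ @MeasurableSet Xspace (borel Xspace) Yset := by
  intro hY
  have hφ : Continuous fun c => treePoint (diagTree c) :=
    continuous_treePoint eventually_diagTree_eq
  have hpre := hφ.borel_measurable hY
  rw [← BorelSpace.measurable_eq] at hpre
  refine not_analyticSet_compl_diagTree ?_
  have hset : {c | ∃ y : ℕ → ℕ, ∀ n, diagTree c (revPrefix y n) = true} =
      (fun c => treePoint (diagTree c)) ⁻¹' Yset :=
    Set.ext fun c => (treePoint_mem_Yset_iff _).symm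
  rw [hset]
  have : PolishSpace Bool := by
    let : UniformSpace Bool := ⊥
    have : DiscreteUniformity Bool := ⟨rfl⟩
    infer_instance
  exact hpre.compl.analyticSet
end

section
/- The set W of all rational norms p ∈ Z such that the three closed balls of radius 1 around 2e₀, 2e₁ and 2e₀ + 2e₁ have a nonempty intersection in the completion of (N, p) — concretely, such that there exists a sequence (w_k) in N that is Cauchy with respect to p and satisfies limsup_k p(w_k − 2e₀) ≤ 1, limsup_k p(w_k − 2e₁) ≤ 1 and limsup_k p(w_k − 2e₀ − 2e₁) ≤ 1 — is an analytic subset of the Polish space Z. -/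
/-- The Polish space `Z` of all rational norms on `N`, topologized as a subspace of
`N → ℚ` (with `ℚ` discrete). -/
def Zspace : Type := {p : (ℕ →₀ ℚ) → ℚ // IsRatNorm p}

instance : TopologicalSpace Zspace := instTopologicalSpaceSubtype

/-- The set `W ⊆ Z` of rational norms `p` such that the three closed balls of radius `1`
around `2e₀`, `2e₁` and `2e₀ + 2e₁` have a common point in the completion of `(N, p)`:
there is a `p`-Cauchy sequence `(w k)` whose distances to the three centers have
`limsup ≤ 1`. -/
def Wset : Set Zspace :=
  {p | ∃ w : ℕ → ℕ →₀ ℚ, IsCauchyWrt p.val w ∧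
    Filter.limsup (fun k => ((p.val (w k - Finsupp.single 0 2) : ℚ) : ℝ)) Filter.atTop ≤ 1 ∧
    Filter.limsup (fun k => ((p.val (w k - Finsupp.single 1 2) : ℚ) : ℝ)) Filter.atTop ≤ 1 ∧
    Filter.limsup
      (fun k => ((p.val (w k - Finsupp.single 0 2 - Finsupp.single 1 2) : ℚ) : ℝ))
      Filter.atTop ≤ 1}

open MeasureTheory Topology

instance : DiscreteTopology ℚ := ⟨rfl⟩

/-- The space of rational norms is closed in the space of all functions `N → ℚ`. -/
theorem isClosed_setOf_isRatNorm : IsClosed {p : (ℕ →₀ ℚ) → ℚ | IsRatNorm p} := by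
  have key : {p : (ℕ →₀ ℚ) → ℚ | IsRatNorm p} =
      {p | ∀ v, 0 ≤ p v} ∩ {p | ∀ v, p v = 0 ↔ v = 0} ∩
        {p | ∀ (q : ℚ) (v), p (q • v) = |q| * p v} ∩ {p | ∀ v w, p (v + w) ≤ p v + p w} := by
    ext p
    exact ⟨fun h => ⟨⟨⟨h.nonneg, h.eq_zero_iff⟩, h.smul_eq⟩, h.add_le⟩,
      fun h => ⟨h.1.1.1, h.1.1.2, h.1.2, h.2⟩⟩
  have one (v : ℕ →₀ ℚ) (A : Set ℚ) : IsClosed {p : (ℕ →₀ ℚ) → ℚ | p v ∈ A} :=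
    (isClosed_discrete A).preimage (continuous_apply v)
  have two (v w : ℕ →₀ ℚ) (A : Set (ℚ × ℚ)) :
      IsClosed {p : (ℕ →₀ ℚ) → ℚ | (p v, p w) ∈ A} :=
    (isClosed_discrete A).preimage ((continuous_apply v).prodMk (continuous_apply w))
  have three (u v w : ℕ →₀ ℚ) (A : Set (ℚ × ℚ × ℚ)) :
      IsClosed {p : (ℕ →₀ ℚ) → ℚ | (p u, p v, p w) ∈ A} :=
    (isClosed_discrete A).preimage
      ((continuous_apply u).prodMk ((continuous_apply v).prodMk (continuous_apply w)))
  rw [key]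
  refine ((IsClosed.inter ?_ ?_).inter ?_).inter ?_ <;> simp only [Set.ofPred_forall]
  · exact isClosed_iInter fun v => one v {x | 0 ≤ x}
  · exact isClosed_iInter fun v => one v {x | x = 0 ↔ v = 0}
  · exact isClosed_iInter fun q => isClosed_iInter fun v => two (q • v) v {x | x.1 = |q| * x.2}
  · exact isClosed_iInter fun v => isClosed_iInter fun w =>
      three (v + w) v w {x | x.1 ≤ x.2.1 + x.2.2}

/-- A countable discrete space is Polish. -/
theorem polishSpace_of_countable_of_discreteTopology (X : Type*) [TopologicalSpace X]
    [DiscreteTopology X] [Countable X] : PolishSpace X := by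
  infer_instance

instance : PolishSpace ℚ := polishSpace_of_countable_of_discreteTopology ℚ

instance : PolishSpace Zspace :=
  isClosed_setOf_isRatNorm.polishSpace

/-- Evaluating a norm at a continuously varying vector is continuous when `N` is discrete. -/
theorem continuous_val_apply {X : Type*} [TopologicalSpace X] [TopologicalSpace (ℕ →₀ ℚ)]
    [DiscreteTopology (ℕ →₀ ℚ)] {f : X → Zspace} {g : X → ℕ →₀ ℚ}
    (hf : Continuous f) (hg : Continuous g) : Continuous fun x => (f x).val (g x) := by
  rw [continuous_iff_continuousAt]
  intro x
  have hloc : (fun y => (f y).val (g y)) =ᶠ[𝓝 x] fun y => (f y).val (g x) := by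
    filter_upwards [hg.continuousAt ((isOpen_discrete {g x}).mem_nhds rfl)] with y hy
    exact congrArg (f y).val hy
  refine ContinuousAt.congr ?_ hloc.symm
  exact ((continuous_apply (g x)).comp (continuous_subtype_val.comp hf)).continuousAt

/-- The set `W` of norms for which the three closed unit balls around `2e₀`, `2e₁`,
`2e₀ + 2e₁` meet in the completion is an analytic subset of `Z`. -/
theorem stmt12 : MeasureTheory.AnalyticSet Wset := by
  let : TopologicalSpace (ℕ →₀ ℚ) := ⊥
  have : DiscreteTopology (ℕ →₀ ℚ) := ⟨rfl⟩
  have : PolishSpace (ℕ →₀ ℚ) := polishSpace_of_countable_of_discreteTopology _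
  let : MeasurableSpace (Zspace × (ℕ → ℕ →₀ ℚ)) := borel _
  have : BorelSpace (Zspace × (ℕ → ℕ →₀ ℚ)) := ⟨rfl⟩
  have hw (k : ℕ) : Continuous fun x : Zspace × (ℕ → ℕ →₀ ℚ) => x.2 k :=
    (continuous_apply k).comp continuous_snd
  have hval (k : ℕ) (g : (ℕ →₀ ℚ) → ℕ →₀ ℚ) :
      Measurable fun x : Zspace × (ℕ → ℕ →₀ ℚ) => ((x.1.val (g (x.2 k)) : ℚ) : ℝ) :=
    ((continuous_of_discreteTopology (f := fun q : ℚ => (q : ℝ))).comp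
      (continuous_val_apply continuous_fst
        ((continuous_of_discreteTopology (f := g)).comp (hw k)))).measurable
  have hball (g : (ℕ →₀ ℚ) → ℕ →₀ ℚ) :
      MeasurableSet {x : Zspace × (ℕ → ℕ →₀ ℚ) |
        Filter.limsup (fun k => ((x.1.val (g (x.2 k)) : ℚ) : ℝ)) Filter.atTop ≤ 1} :=
    measurableSet_le (Measurable.limsup fun k => hval k g) measurable_const
  have hcauchy : MeasurableSet {x : Zspace × (ℕ → ℕ →₀ ℚ) | IsCauchyWrt x.1.val x.2} := by
    simp only [IsCauchyWrt, Set.ofPred_forall, Set.ofPred_exists]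
    refine .iInter fun ε => .iInter fun _ => .iUnion fun K => .iInter fun m => .iInter fun k =>
      .iInter fun _ => .iInter fun _ => ?_
    have hdiff : Continuous fun x : Zspace × (ℕ → ℕ →₀ ℚ) => x.2 m - x.2 k :=
      (continuous_of_discreteTopology (f := fun v : (ℕ →₀ ℚ) × (ℕ →₀ ℚ) => v.1 - v.2)).comp
        ((hw m).prodMk (hw k))
    exact ((isOpen_discrete {q : ℚ | q < ε}).preimage
      (continuous_val_apply continuous_fst hdiff)).measurableSet
  have himage : Wset = Prod.fst '' {x : Zspace × (ℕ → ℕ →₀ ℚ) | IsCauchyWrt x.1.val x.2 ∧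
      Filter.limsup (fun k => ((x.1.val (x.2 k - Finsupp.single 0 2) : ℚ) : ℝ))
        Filter.atTop ≤ 1 ∧
      Filter.limsup (fun k => ((x.1.val (x.2 k - Finsupp.single 1 2) : ℚ) : ℝ))
        Filter.atTop ≤ 1 ∧
      Filter.limsup
        (fun k => ((x.1.val (x.2 k - Finsupp.single 0 2 - Finsupp.single 1 2) : ℚ) : ℝ))
        Filter.atTop ≤ 1} := by
    ext p
    exact ⟨fun ⟨w, h⟩ => ⟨(p, w), h, rfl⟩, fun ⟨⟨_, w⟩, h, hp⟩ => hp ▸ ⟨w, h⟩⟩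
  rw [himage]
  refine (MeasurableSet.analyticSet ?_).image_of_continuous continuous_fst
  exact hcauchy.inter ((hball fun v => v - Finsupp.single 0 2).inter
    ((hball fun v => v - Finsupp.single 1 2).inter
      (hball fun v => v - Finsupp.single 0 2 - Finsupp.single 1 2)))
end

section
/- Let M be a separable real Banach space, let X be a separable metric space, and let ι : M → X be an isometric embedding whose range ι(M) is a closed subset of X. Then there exists a continuous map g : X → M such that g(ι(z)) = z for every z ∈ M; in other words, ι(M) is a retract of X (the map ι ∘ g : X → X is a continuous retraction of X onto ι(M)). -/
/-- The points of `M` whose distance to each `z` exceeds that from `x` to `ι z` by at most twice the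
distance from `x` to the range of `ι`. -/
def nearbyPoints {M X : Type*} [PseudoMetricSpace M] [PseudoMetricSpace X] (ι : M → X) (x : X) :
    Set M :=
  ⋂ z, Metric.closedBall z (dist x (ι z) + 2 * Metric.infDist x (Set.range ι))

theorem convex_nearbyPoints {M X : Type*} [SeminormedAddCommGroup M] [NormedSpace ℝ M]
    [PseudoMetricSpace X] (ι : M → X) (x : X) : Convex ℝ (nearbyPoints ι x) :=
  convex_iInter fun z => convex_closedBall z _

theorem mem_nearbyPoints_of_dist_le {M X : Type*} [PseudoMetricSpace M] [PseudoMetricSpace X]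
    {ι : M → X} (hι : Isometry ι) {x : X} {w : M}
    (h : dist x (ι w) ≤ 2 * Metric.infDist x (Set.range ι)) : w ∈ nearbyPoints ι x := by
  refine Set.mem_iInter.2 fun z => Metric.mem_closedBall.2 ?_
  rw [← hι.dist_eq]
  linarith [dist_triangle_left (ι w) (ι z) x]

theorem dist_le_of_mem_nearbyPoints {M X : Type*} [PseudoMetricSpace M] [PseudoMetricSpace X]
    {ι : M → X} {x : X} {w : M} (h : w ∈ nearbyPoints ι x) (z : M) :
    dist w z ≤ 3 * dist x (ι z) := by
  have hw := Metric.mem_closedBall.1 (Set.mem_iInter.1 h z)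
  linarith [Metric.infDist_le_dist_of_mem (x := x) (Set.mem_range_self (f := ι) z)]

/-- Off the closed range of `ι`, the sets `nearbyPoints ι x` admit a continuous selection. -/
theorem exists_continuous_mem_nearbyPoints {M X : Type*} [NormedAddCommGroup M] [NormedSpace ℝ M]
    [MetricSpace X] {ι : M → X} (hι : Isometry ι) (hclosed : IsClosed (Set.range ι)) :
    ∃ f : C(((Set.range ι)ᶜ : Set X), M),
      ∀ x : ((Set.range ι)ᶜ : Set X), f x ∈ nearbyPoints ι (x : X) := by
  refine exists_continuous_forall_mem_convex_of_local_const
    (fun x => convex_nearbyPoints ι (x : X)) fun x => ?_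
  have hpos : 0 < Metric.infDist (x : X) (Set.range ι) :=
    (hclosed.notMem_iff_infDist_pos (Set.range_nonempty ι)).1 x.2
  obtain ⟨_, ⟨w, rfl⟩, hw⟩ := (Metric.infDist_lt_iff (Set.range_nonempty ι)).1
    (show Metric.infDist (x : X) (Set.range ι) < 2 * Metric.infDist (x : X) (Set.range ι) by
      linarith)
  have hdist : Continuous fun y : ((Set.range ι)ᶜ : Set X) => dist (y : X) (ι w) := by fun_prop
  have hinf : Continuous fun y : ((Set.range ι)ᶜ : Set X) =>
      2 * Metric.infDist (y : X) (Set.range ι) :=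
    continuous_const.mul ((Metric.continuous_infDist_pt _).comp continuous_subtype_val)
  refine ⟨w, ?_⟩
  filter_upwards [hdist.continuousAt.eventually_lt hinf.continuousAt hw] with y hy
  exact mem_nearbyPoints_of_dist_le hι hy.le

/-- If a separable real Banach space `M` sits, via an isometric embedding `ι` with closed
range, inside a separable metric space `X`, then there is a continuous `g : X → M` with
`g ∘ ι = id`; i.e. `ι '' M` is a retract of `X` (via `ι ∘ g`). -/
theorem stmt16 {M : Type*} [NormedAddCommGroup M] [NormedSpace ℝ M] [CompleteSpace M]
    [TopologicalSpace.SeparableSpace M]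
    {X : Type*} [MetricSpace X] [TopologicalSpace.SeparableSpace X]
    (ι : M → X) (hι : Isometry ι) (hclosed : IsClosed (Set.range ι)) :
    ∃ g : X → M, Continuous g ∧ ∀ z : M, g (ι z) = z := by
  classical
  obtain ⟨f, hf⟩ := exists_continuous_mem_nearbyPoints hι hclosed
  let g : X → M := fun x => if hx : x ∈ (Set.range ι)ᶜ then f ⟨x, hx⟩ else Function.invFun ι x
  have hgι : ∀ z, g (ι z) = z := fun z => by
    simp [g, Function.leftInverse_invFun hι.injective z]
  have hg : ∀ x z, dist (g x) z ≤ 3 * dist x (ι z) := by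
    intro x z
    by_cases hx : x ∈ (Set.range ι)ᶜ
    · simpa only [g, dif_pos hx] using dist_le_of_mem_nearbyPoints (hf ⟨x, hx⟩) z
    · obtain ⟨w, rfl⟩ := Set.notMem_compl_iff.1 hx
      rw [hgι, hι.dist_eq]
      linarith [dist_nonneg (x := w) (y := z)]
  refine ⟨g, continuous_iff_continuousAt.2 fun x => ?_, hgι⟩
  by_cases hx : x ∈ (Set.range ι)ᶜ
  · have hfg : ContinuousOn g (Set.range ι)ᶜ := by
      rw [continuousOn_iff_continuous_domRestrict]
      convert f.continuous using 1
      ext y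
      exact dif_pos y.2
    exact hfg.continuousAt (hclosed.isOpen_compl.mem_nhds hx)
  · obtain ⟨z, rfl⟩ := Set.notMem_compl_iff.1 hx
    exact continuousAt_of_locally_lipschitz one_pos 3 fun y _ => by
      simpa only [hgι] using hg y z
end

section
/- Let M be a real Banach space. Suppose f_k → f pointwise on ℕ (as functions ℕ → ℝ, all taking nonnegative values) and g_k → g pointwise on ℕ (as functions ℕ → M), and suppose that ᾱ(f, g) is defined and that ᾱ(f_k, g_k) is defined for every k ∈ ℕ. Then ᾱ(f_k, g_k) → ᾱ(f, g) in M as k → ∞. -/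
open Classical

/-- The accumulation operator `ᾱ(f, g)` is defined exactly when some partial sum
`∑_{i=0}^{n} f i` exceeds `1`. -/
def accDefined (f : ℕ → ℝ) : Prop :=
  ∃ n, 1 < ∑ i ∈ Finset.range (n + 1), f i

/-- The accumulation operator: with `n` least such that `∑_{i=0}^{n} f i > 1` and
`λ = 1 - ∑_{i=0}^{n-1} f i`, set `ᾱ(f, g) = ∑_{i=0}^{n-1} f i • g i + λ • g n`
(and junk value `0` when undefined). -/
noncomputable def acc {M : Type*} [NormedAddCommGroup M] [NormedSpace ℝ M]
    (f : ℕ → ℝ) (g : ℕ → M) : M :=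
  if h : accDefined f then
    (∑ i ∈ Finset.range (Nat.find h), f i • g i) +
      (1 - ∑ i ∈ Finset.range (Nat.find h), f i) • g (Nat.find h)
  else 0

/-- Once a partial sum of a nonnegative `f` exceeds `1`, the accumulation operator is a finite sum
weighted by the increments of the partial sums truncated at `1`. -/
theorem acc_eq_sum_min {M : Type*} [NormedAddCommGroup M] [NormedSpace ℝ M]
    {f : ℕ → ℝ} (g : ℕ → M) (hf : ∀ i, 0 ≤ f i) {N : ℕ}
    (hN : 1 < ∑ i ∈ Finset.range (N + 1), f i) :
    acc f g = ∑ i ∈ Finset.range (N + 1),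
      (min 1 (∑ j ∈ Finset.range (i + 1), f j) - min 1 (∑ j ∈ Finset.range i, f j)) • g i := by
  have hdef : accDefined f := ⟨N, hN⟩
  rw [acc, dif_pos hdef]
  have hn := Nat.find_spec hdef
  have hnN : Nat.find hdef ≤ N := Nat.find_min' hdef hN
  have hlt : ∀ i < Nat.find hdef, ∑ j ∈ Finset.range (i + 1), f j ≤ 1 :=
    fun i hi => not_lt.mp (Nat.find_min hdef hi)
  generalize Nat.find hdef = n at hn hnN hlt
  have mono : Monotone fun m => ∑ j ∈ Finset.range m, f j :=
    monotone_nat_of_le_succ fun m => by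
      simpa [Finset.sum_range_succ] using hf m
  have hle : ∀ i ≤ n, ∑ j ∈ Finset.range i, f j ≤ 1 := by
    rintro (_ | i) hi
    · simp
    · exact hlt i hi
  have htail : ∀ i ∈ Finset.range (N + 1), i ∉ Finset.range (n + 1) →
      (min 1 (∑ j ∈ Finset.range (i + 1), f j) - min 1 (∑ j ∈ Finset.range i, f j)) • g i = 0 := by
    intro i _ hi
    have hi : n + 1 ≤ i := by simpa using hi
    rw [min_eq_left (hn.le.trans (mono hi)),
      min_eq_left (hn.le.trans (mono (hi.trans i.le_succ))), sub_self, zero_smul]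
  rw [← Finset.sum_subset (Finset.range_mono (Nat.succ_le_succ hnN)) htail,
    Finset.sum_range_succ _ n, min_eq_left hn.le, min_eq_right (hle n le_rfl)]
  congr 1
  refine Finset.sum_congr rfl fun i hi => ?_
  have hi : i < n := Finset.mem_range.mp hi
  rw [min_eq_right (hlt i hi), min_eq_right (hle i hi.le), Finset.sum_range_succ,
    add_sub_cancel_left]

/-- Continuity of the accumulation operator on its domain: if `f_k → f` and `g_k → g`
pointwise (with all `f`'s nonnegative), `ᾱ(f, g)` is defined and each `ᾱ(f_k, g_k)` is
defined, then `ᾱ(f_k, g_k) → ᾱ(f, g)`. -/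
theorem stmt17 {M : Type*} [NormedAddCommGroup M] [NormedSpace ℝ M] [CompleteSpace M]
    (f : ℕ → ℝ) (fk : ℕ → ℕ → ℝ) (g : ℕ → M) (gk : ℕ → ℕ → M)
    (hf0 : ∀ i, 0 ≤ f i) (hfk0 : ∀ k i, 0 ≤ fk k i)
    (hfconv : ∀ i, Filter.Tendsto (fun k => fk k i) Filter.atTop (nhds (f i)))
    (hgconv : ∀ i, Filter.Tendsto (fun k => gk k i) Filter.atTop (nhds (g i)))
    (hdef : accDefined f) (hdefk : ∀ k, accDefined (fk k)) :
    Filter.Tendsto (fun k => acc (fk k) (gk k)) Filter.atTop (nhds (acc f g)) := by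
  obtain ⟨N, hN⟩ := hdef
  have hsum : ∀ m, Filter.Tendsto (fun k => ∑ i ∈ Finset.range m, fk k i) Filter.atTop
      (nhds (∑ i ∈ Finset.range m, f i)) :=
    fun m => tendsto_finsetSum _ fun i _ => hfconv i
  rw [acc_eq_sum_min g hf0 hN]
  refine Filter.Tendsto.congr' ?_ (tendsto_finsetSum (Finset.range (N + 1)) fun i _ =>
    ((tendsto_const_nhds.min (hsum (i + 1))).sub (tendsto_const_nhds.min (hsum i))).smul
      (hgconv i))
  filter_upwards [(hsum (N + 1)).eventually_const_lt hN] with k hk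
  exact (acc_eq_sum_min (gk k) (hfk0 k) hk).symm
end

section
/- Let Y be a complete metric space and y : ℕ → Y a sequence of points. Let (μ_k)_{k∈ℕ} be a sequence of probability distributions on ℕ that is fast converging in Y. Then for any γ, γ' : ℕ → ℕ with μ_k(γ(k)) > 0 and μ_k(γ'(k)) > 0 for all k, the sequences (y_{γ(k)})_k and (y_{γ'(k)})_k both converge in Y and have the same limit. -/
/-- If `(μ_k)` is a sequence of probability distributions on `ℕ` that is fast converging
in a complete metric space `Y` (with respect to the points `y : ℕ → Y`), then for any two
selectors `γ, γ'` with `μ_k (γ k) > 0` and `μ_k (γ' k) > 0` for all `k`, the sequences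
`(y (γ k))` and `(y (γ' k))` converge to the same limit. -/
theorem stmt18 {Y : Type*} [MetricSpace Y] [CompleteSpace Y] (y : ℕ → Y)
    (μ : ℕ → ℕ → ℝ)
    (hμ0 : ∀ k n, 0 ≤ μ k n) (hμ1 : ∀ k, HasSum (μ k) 1)
    (hfast : ∀ γ : ℕ → ℕ, (∀ k, 0 < μ k (γ k)) →
      ∀ k, dist (y (γ k)) (y (γ (k + 1))) ≤ ((2 : ℝ) ^ k)⁻¹)
    (γ γ' : ℕ → ℕ) (hγ : ∀ k, 0 < μ k (γ k)) (hγ' : ∀ k, 0 < μ k (γ' k)) :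
    ∃ l : Y, Filter.Tendsto (fun k => y (γ k)) Filter.atTop (nhds l) ∧
      Filter.Tendsto (fun k => y (γ' k)) Filter.atTop (nhds l) := by
  have hmix : ∀ k, dist (y (γ k)) (y (γ' (k + 1))) ≤ ((2 : ℝ) ^ k)⁻¹ := by
    intro k
    have h := hfast (Function.update γ (k + 1) (γ' (k + 1))) (fun j => by
      rcases eq_or_ne j (k + 1) with rfl | hj
      · simpa using hγ' (k + 1)
      · simpa [hj] using hγ j) k
    simpa using h
  have hzero : Filter.Tendsto (fun k : ℕ => ((2 : ℝ) ^ k)⁻¹) Filter.atTop (nhds 0) := by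
    simpa using tendsto_pow_atTop_nhds_zero_of_lt_one (r := (2 : ℝ)⁻¹) (by norm_num) (by norm_num)
  have hcauchy : CauchySeq fun k => y (γ k) :=
    cauchySeq_of_le_geometric (2 : ℝ)⁻¹ 1 (by norm_num) fun k => by
      simpa using hfast γ hγ k
  obtain ⟨l, hl⟩ := cauchySeq_tendsto_of_complete hcauchy
  refine ⟨l, hl, (Filter.tendsto_add_atTop_iff_nat 1).1 ?_⟩
  exact hl.congr_dist (squeeze_zero (fun _ => dist_nonneg) hmix hzero)
end
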